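/- arXiv:2009.10446 — 6 statements merged into one kernel-verified Lean document; each statement's English description precedes it below -/
import Mathlib

section
/- Let D, d, d_e be natural numbers with 1 ≤ d_e ≤ d and d_e ≤ D, let U be a D×d_e real matrix with UᵀU = I, let p, x* ∈ ℝ^D, and set z* = Uᵀ(x* − p); assume z* ≠ 0. Let μ be the Gaussian matrix measure on D×d real matrices. Then the pushforward of μ under the map A ↦ ‖z*‖² / ‖y₂*(A)‖², where B = Uᵀ A and y₂*(A) = Bᵀ (B Bᵀ)⁻¹ z*, equals the chi-squared distribution with d − d_e + 1 degrees of freedom, i.e. the Gamma distribution with shape (d − d_e + 1)/2 and rate 1/2. (The map may be given any fixed convention, e.g. Mathlib's junk-value matrix inverse, on the μ-null set of A for which B Bᵀ is singular.) -/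
/-!
Since `U` has orthonormal columns, `B = Uᵀ A` is a `d_e × d` Gaussian matrix
(`map_transpose_mul_gaussMatrix`, by characteristic functions). By the same invariance one may
rotate `z*` to `s e₀` with `s = ‖z*‖`. Then `y = Bᵀ (B Bᵀ)⁻¹ z*` is the vector of the row space
which is orthogonal to all rows but the first and has inner product `s` with the first row `c`;
hence `y = (s / ‖P c‖²) P c`, where `P` is the orthogonal projection onto the orthogonal complement
of the span of the other rows, and `‖z*‖² / ‖y‖² = ‖P c‖²` (`normRatio_eq`). This is valid as soon
as the rows are linearly independent, which holds almost surely (`ae_linearIndependent`).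

Conditionally on the other `d_e - 1` rows, `c` is a standard Gaussian vector, and its squared
distance to a fixed subspace of dimension `d_e - 1` is a sum of `d - d_e + 1` squares of independent
standard Gaussians (`map_norm_sq_starProjection`). The law of such a sum is identified with a Gamma
law through its moment generating function (`map_sum_sq_pi_gaussianReal`).
-/

open Matrix MeasureTheory ProbabilityTheory

/-- The Gaussian matrix measure on `D × d` real matrices: all entries i.i.d. `N(0,1)`. -/
noncomputable def gaussMatrix (D d : ℕ) : Measure (Fin D → Fin d → ℝ) :=
  Measure.pi fun _ => Measure.pi fun _ => gaussianReal 0 1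

/-- The Euclidean norm on `ℝ^k`. -/
noncomputable def euclNorm {k : ℕ} (y : Fin k → ℝ) : ℝ := Real.sqrt (∑ i, y i ^ 2)

/-! ### The chi-squared law -/

lemma measurable_gammaPDF_aux (a r : ℝ) : Measurable (gammaPDF a r) :=
  ENNReal.measurable_ofReal.comp (measurable_gammaPDFReal a r)

lemma mgf_gammaMeasure_half {a : ℝ} (ha : 0 < a) {t : ℝ} (ht : t < 1 / 2) :
    mgf id (gammaMeasure a (1 / 2)) t = (1 / (1 - 2 * t)) ^ a := by
  have hr : (0 : ℝ) < 1 / 2 - t := by linarith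
  have hden : ∀ x : ℝ, (gammaPDF a (1 / 2) x).toReal • Real.exp (t * id x) =
      (Set.Ici (0 : ℝ)).indicator (fun x => (1 / 2) ^ a / Real.Gamma a *
        (x ^ (a - 1) * Real.exp (-((1 / 2 - t) * x)))) x := by
    intro x
    rw [gammaPDF, ENNReal.toReal_ofReal (gammaPDFReal_nonneg ha (by norm_num) x), gammaPDFReal]
    by_cases hx : 0 ≤ x
    · rw [if_pos hx, Set.indicator_of_mem (Set.mem_Ici.2 hx), smul_eq_mul, mul_assoc, mul_assoc,
        ← Real.exp_add, id]
      congr 4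
      ring
    · rw [if_neg hx, Set.indicator_of_notMem (by simpa using hx), zero_smul]
  rw [mgf, gammaMeasure, integral_withDensity_eq_integral_toReal_smul
    (measurable_gammaPDF_aux a _) (ae_of_all _ fun _ => ENNReal.ofReal_lt_top)]
  simp_rw [hden]
  rw [integral_indicator measurableSet_Ici, integral_Ici_eq_integral_Ioi, integral_const_mul,
    Real.integral_rpow_mul_exp_neg_mul_Ioi ha hr]
  have hG := (Real.Gamma_pos_of_pos ha).ne'
  have : (1 / (1 - 2 * t)) = (1 / 2) * (1 / (1 / 2 - t)) := by
    have : 1 - 2 * t ≠ 0 := by linarith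
    field_simp
  rw [this, Real.mul_rpow (by norm_num) (by positivity)]
  field_simp

/-- For `t ≥ 1 / 2` the exponential `exp (t x)` is not integrable against the Gamma law of rate
`1 / 2`, so the Bochner integral defining the moment generating function takes the value `0`. -/
lemma mgf_gammaMeasure_half_of_le {a : ℝ} (ha : 0 < a) {t : ℝ} (ht : 1 / 2 ≤ t) :
    mgf id (gammaMeasure a (1 / 2)) t = 0 := by
  apply mgf_undef
  intro h
  rw [gammaMeasure, integrable_withDensity_iff_integrable_smul' (measurable_gammaPDF_aux a _)
    (ae_of_all _ fun _ => ENNReal.ofReal_lt_top)] at h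
  refine not_integrableOn_Ioi_rpow (a - 1) ?_
  have hG := (Real.Gamma_pos_of_pos ha)
  have h' := (h.const_mul ((1 / 2) ^ a / Real.Gamma a)⁻¹).integrableOn (s := Set.Ioi 0)
  refine Integrable.mono h' (by fun_prop) ?_
  refine (ae_restrict_iff' measurableSet_Ioi).2 (ae_of_all _ fun x (hx : 0 < x) => ?_)
  rw [gammaPDF, ENNReal.toReal_ofReal (gammaPDFReal_nonneg ha (by norm_num) x), gammaPDFReal,
    if_pos hx.le]
  have : ((1 / 2 : ℝ) ^ a / Real.Gamma a)⁻¹ * (((1 / 2) ^ a / Real.Gamma a * x ^ (a - 1) *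
      Real.exp (-(1 / 2 * x))) • Real.exp (t * id x)) =
      x ^ (a - 1) * Real.exp ((t - 1 / 2) * x) := by
    rw [show (t - 1 / 2) * x = -(1 / 2 * x) + t * x by ring, Real.exp_add, smul_eq_mul, id]
    have : ((1 / 2 : ℝ) ^ a) ≠ 0 := by positivity
    field_simp
  rw [this, Real.norm_of_nonneg (by positivity), Real.norm_of_nonneg (by positivity)]
  refine le_mul_of_one_le_right (by positivity) (Real.one_le_exp ?_)
  exact mul_nonneg (by linarith) hx.le

lemma integral_exp_sq_gaussianReal (t : ℝ) :
    ∫ x, Real.exp (t * x ^ 2) ∂gaussianReal 0 1 = √(1 / (1 - 2 * t)) := by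
  rw [integral_gaussianReal_eq_integral_smul one_ne_zero]
  have : ∀ x : ℝ, gaussianPDFReal 0 1 x • Real.exp (t * x ^ 2) =
      (√(2 * Real.pi))⁻¹ * Real.exp (-(1 / 2 - t) * x ^ 2) := by
    intro x
    rw [gaussianPDFReal, smul_eq_mul, mul_assoc, ← Real.exp_add]
    rw [show -(x - 0) ^ 2 / (2 * ((1 : NNReal) : ℝ)) + t * x ^ 2 = -(1 / 2 - t) * x ^ 2 by
      push_cast; ring]
    simp
  simp_rw [this]
  rw [integral_const_mul, integral_gaussian, ← Real.sqrt_inv, ← Real.sqrt_mul (by positivity)]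
  congr 1
  have := Real.pi_pos
  rw [show 1 - 2 * t = 2 * (1 / 2 - t) by ring]
  field_simp

/-- The sum of squares of `k ≥ 1` independent standard Gaussians is `χ²_k`-distributed. Both sides
have moment generating function `(1 - 2 t) ^ (-k / 2)` for `t < 1 / 2`, and it is infinite (in the
form of a Bochner integral: `0`) for `t ≥ 1 / 2`. -/
lemma map_sum_sq_pi_gaussianReal {k : ℕ} (hk : 0 < k) :
    (Measure.pi fun _ : Fin k => gaussianReal 0 1).map (fun x => ∑ i, x i ^ 2) =
      gammaMeasure (k / 2 : ℝ) (1 / 2) := by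
  have ha : (0 : ℝ) < k / 2 := by positivity
  have := isProbabilityMeasure_gammaMeasure ha (by norm_num : (0 : ℝ) < 1 / 2)
  have hmeas : Measurable (fun x : Fin k → ℝ => ∑ i, x i ^ 2) := by fun_prop
  have := Measure.isProbabilityMeasure_map (μ := Measure.pi fun _ : Fin k => gaussianReal 0 1)
    hmeas.aemeasurable
  have hmgf : mgf id (gammaMeasure (k / 2 : ℝ) (1 / 2)) =
      mgf id ((Measure.pi fun _ : Fin k => gaussianReal 0 1).map (fun x => ∑ i, x i ^ 2)) := by
    ext t
    have hR : mgf id ((Measure.pi fun _ : Fin k => gaussianReal 0 1).map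
        (fun x => ∑ i, x i ^ 2)) t = √(1 / (1 - 2 * t)) ^ k := by
      rw [mgf, integral_map hmeas.aemeasurable (by fun_prop)]
      simp_rw [id, Finset.mul_sum, Real.exp_sum]
      rw [integral_fintype_prod_eq_prod (f := fun _ x => Real.exp (t * x ^ 2))]
      simp [integral_exp_sq_gaussianReal]
    rw [hR]
    rcases lt_or_ge t (1 / 2) with ht | ht
    · rw [mgf_gammaMeasure_half ha ht, Real.sqrt_eq_rpow, ← Real.rpow_mul_natCast]
      · congr 1; ring
      · exact one_div_nonneg.2 (by linarith)
    · rw [mgf_gammaMeasure_half_of_le ha ht, Real.sqrt_eq_zero_of_nonpos, zero_pow hk.ne']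
      exact one_div_nonpos.2 (by linarith)
  have hint : (0 : ℝ) ∈ interior (integrableExpSet id (gammaMeasure (k / 2 : ℝ) (1 / 2))) := by
    refine mem_interior.2 ⟨Set.Iio (1 / 2), fun t (ht : t < 1 / 2) => ?_, isOpen_Iio, by norm_num⟩
    by_contra hcon
    have h0 := mgf_undef hcon
    rw [mgf_gammaMeasure_half ha ht] at h0
    have : 0 < 1 - 2 * t := by linarith
    have : 0 < (1 / (1 - 2 * t)) ^ (k / 2 : ℝ) := by positivity
    linarith
  symm
  refine Measure.ext_of_charFun ?_
  ext t
  rw [← complexMGF_id_mul_I, ← complexMGF_id_mul_I]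
  exact eqOn_complexMGF_of_mgf hmgf (by simpa using hint)

/-! ### Orthogonal invariance of Gaussian matrices -/

instance isProbabilityMeasure_gaussMatrix (D d : ℕ) : IsProbabilityMeasure (gaussMatrix D d) := by
  unfold gaussMatrix; infer_instance

/-- The characteristic function depends on the functional `L` only through the sum of squares of its
coefficients, whence the orthogonal invariance of `gaussMatrix`. -/
lemma charFunDual_gaussMatrix {D d : ℕ} (L : StrongDual ℝ (Fin D → Fin d → ℝ)) :
    charFunDual (gaussMatrix D d) L =
      Complex.exp (-((∑ i, ∑ j, L (Pi.single i (Pi.single j 1)) ^ 2 : ℝ) : ℂ) / 2) := by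
  have h1 (M : StrongDual ℝ ℝ) :
      charFunDual (gaussianReal 0 1) M = Complex.exp (-((M 1 ^ 2 : ℝ) : ℂ) / 2) := by
    have : charFunDual (gaussianReal 0 1) M = charFun (gaussianReal 0 1) (M 1) := by
      rw [charFunDual_apply, charFun_apply_real]
      congr with x
      have hM : M x = x * M 1 := by rw [← smul_eq_mul, ← map_smul]; simp
      rw [hM, mul_comm x, Complex.ofReal_mul]
    rw [this, charFun_gaussianReal]
    simp [neg_div]
  rw [gaussMatrix, charFunDual_pi]
  simp_rw [charFunDual_pi, h1, ← Complex.exp_sum, ← Finset.sum_div, Finset.sum_neg_distrib,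
    ← Complex.ofReal_sum]
  rfl

/-- Left multiplication by `Wᵀ`, for `W` with orthonormal columns, maps a Gaussian matrix to a
Gaussian matrix. -/
lemma map_transpose_mul_gaussMatrix {D d n : ℕ} (W : Matrix (Fin D) (Fin n) ℝ)
    (hW : Wᵀ * W = 1) :
    (gaussMatrix D d).map (fun A (i : Fin n) (j : Fin d) => (Wᵀ * Matrix.of A) i j) =
      gaussMatrix n d := by
  let T : (Fin D → Fin d → ℝ) →L[ℝ] (Fin n → Fin d → ℝ) := LinearMap.toContinuousLinearMap
    { toFun := fun A => (Wᵀ * Matrix.of A : Matrix (Fin n) (Fin d) ℝ)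
      map_add' := fun A B => by rw [← Matrix.of_add_of, Matrix.mul_add]; rfl
      map_smul' := fun c A => by rw [← Matrix.smul_of, Matrix.mul_smul]; rfl }
  change (gaussMatrix D d).map T = _
  have := Measure.isProbabilityMeasure_map (μ := gaussMatrix D d) T.continuous.aemeasurable
  refine Measure.ext_of_charFunDual (funext fun L => ?_)
  rw [charFunDual_map, charFunDual_gaussMatrix, charFunDual_gaussMatrix]
  congr 4
  have hT (k : Fin D) (j : Fin d) : (L.comp T) (Pi.single k (Pi.single j 1)) =
      ∑ i, W k i * L (Pi.single i (Pi.single j 1)) := by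
    have : T (Pi.single k (Pi.single j 1)) =
        ∑ i, W k i • (Pi.single i (Pi.single j 1) : Fin n → Fin d → ℝ) := by
      ext a b
      change (Wᵀ * Matrix.of (Pi.single k (Pi.single j (1 : ℝ)) : Fin D → Fin d → ℝ)) a b = _
      simp [Matrix.mul_apply, Finset.sum_apply, Pi.single_apply, apply_ite, ite_apply]
      by_cases h : b = j <;> simp [h]
    rw [ContinuousLinearMap.comp_apply, this, map_sum]
    simp
  simp_rw [hT]
  rw [Finset.sum_comm, Finset.sum_comm (s := (Finset.univ : Finset (Fin n)))]
  refine Finset.sum_congr rfl fun j _ => ?_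
  set v : Fin n → ℝ := fun i => L (Pi.single i (Pi.single j 1)) with hv
  calc ∑ k, (∑ i, W k i * v i) ^ 2 = (W *ᵥ v) ⬝ᵥ (W *ᵥ v) := by
        simp [dotProduct, Matrix.mulVec, sq]
    _ = v ⬝ᵥ ((Wᵀ * W) *ᵥ v) := by
        rw [← Matrix.mulVec_mulVec, Matrix.mulVec_transpose, dotProduct_comm v,
          ← Matrix.dotProduct_mulVec]
    _ = _ := by rw [hW, Matrix.one_mulVec]; simp [dotProduct, sq, hv]

lemma map_transpose_mulVec_pi_gaussianReal {D n : ℕ} (W : Matrix (Fin D) (Fin n) ℝ)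
    (hW : Wᵀ * W = 1) :
    (Measure.pi fun _ : Fin D => gaussianReal 0 1).map (fun x => Wᵀ *ᵥ x) =
      Measure.pi fun _ : Fin n => gaussianReal 0 1 := by
  -- A standard Gaussian vector is a Gaussian matrix with a single column.
  have hcol (m : ℕ) : (gaussMatrix m 1).map (fun A i => A i 0) =
      Measure.pi fun _ : Fin m => gaussianReal 0 1 := by
    refine (measurePreserving_pi (fun _ : Fin m => Measure.pi fun _ : Fin 1 => gaussianReal 0 1)
      (fun _ => gaussianReal 0 1) (f := fun _ (a : Fin 1 → ℝ) => a 0) fun _ => ?_).map_eq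
    exact measurePreserving_eval (fun _ : Fin 1 => gaussianReal 0 1) 0
  have hm1 (m : ℕ) : Measurable (fun (A : Fin m → Fin 1 → ℝ) (i : Fin m) => A i 0) := by fun_prop
  rw [← hcol D, ← hcol n, ← map_transpose_mul_gaussMatrix W hW, Measure.map_map _ (hm1 D),
    Measure.map_map (hm1 n)]
  · rfl
  · refine Continuous.measurable ?_
    exact Continuous.matrix_mul continuous_const continuous_id
  · exact (Continuous.matrix_mulVec continuous_const continuous_id).measurable

/-! ### Distance of a Gaussian vector to a subspace -/

/-- The squared distance of a standard Gaussian vector to a subspace of codimension `k ≥ 1` is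
`χ²_k`-distributed. -/
lemma map_norm_sq_starProjection {d k : ℕ} (V : Submodule ℝ (EuclideanSpace ℝ (Fin d)))
    (hV : Module.finrank ℝ V + k = d) (hk : 0 < k) :
    (Measure.pi fun _ : Fin d => gaussianReal 0 1).map
      (fun x => ‖Vᗮ.starProjection (WithLp.toLp 2 x)‖ ^ 2) = gammaMeasure (k / 2 : ℝ) (1 / 2) := by
  have hfr : Module.finrank ℝ Vᗮ = k := by
    have := V.finrank_add_finrank_orthogonal
    rw [finrank_euclideanSpace_fin] at this
    omega
  let b : OrthonormalBasis (Fin k) ℝ Vᗮ := (stdOrthonormalBasis ℝ Vᗮ).reindex (finCongr hfr)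
  let W : Matrix (Fin d) (Fin k) ℝ := Matrix.of fun j i => (b i : EuclideanSpace ℝ (Fin d)) j
  have hW : Wᵀ * W = 1 := by
    ext i j
    have := (orthonormal_iff_ite.1 b.orthonormal) j i
    rw [Submodule.coe_inner, PiLp.inner_apply] at this
    simpa [Matrix.mul_apply, W, Matrix.one_apply, eq_comm] using this
  have hm : Measurable fun x : Fin d → ℝ => Wᵀ *ᵥ x :=
    (Continuous.matrix_mulVec continuous_const continuous_id).measurable
  rw [← map_sum_sq_pi_gaussianReal hk, ← map_transpose_mulVec_pi_gaussianReal W hW,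
    Measure.map_map (by fun_prop) hm]
  congr 1
  ext x
  rw [Submodule.starProjection_apply, ← Submodule.coe_norm, ← b.sum_sq_inner_right]
  refine Finset.sum_congr rfl fun i _ => ?_
  congr 1
  rw [Submodule.inner_orthogonalProjectionOnto_eq_of_mem_left, PiLp.inner_apply]
  simp [W, Matrix.mulVec, dotProduct, mul_comm]

/-- A proper subspace is a null set: otherwise the distance to it, which has a density, would have an
atom at `0`. -/
lemma ae_notMem_of_finrank_lt {d : ℕ} (V : Submodule ℝ (EuclideanSpace ℝ (Fin d)))
    (hV : Module.finrank ℝ V < d) :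
    ∀ᵐ x ∂(Measure.pi fun _ : Fin d => gaussianReal 0 1), WithLp.toLp 2 x ∉ V := by
  have hlaw := map_norm_sq_starProjection V (k := d - Module.finrank ℝ V) (by omega) (by omega)
  have h0 : gammaMeasure (((d - Module.finrank ℝ V : ℕ) : ℝ) / 2) (1 / 2) {0} = 0 :=
    withDensity_absolutelyContinuous _ _ (by simp)
  rw [← hlaw, Measure.map_apply (by fun_prop) (measurableSet_singleton 0)] at h0
  refine measure_mono_null (fun x hx => ?_) h0
  have hx : WithLp.toLp 2 x ∈ V := by simpa using hx
  simp only [Set.mem_preimage, Submodule.starProjection_orthogonal_apply_eq_zero hx]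
  simp

/-! ### Linear independence of Gaussian rows -/

lemma gram_toLp {n d : ℕ} (C : Fin n → Fin d → ℝ) :
    Matrix.gram ℝ (fun i => WithLp.toLp 2 (C i)) = Matrix.of C * (Matrix.of C)ᵀ := by
  ext i j
  simp [Matrix.mul_apply, PiLp.inner_apply, mul_comm]

/-- The rows of `C` are linearly independent iff their Gram matrix `C Cᵀ` is invertible. -/
lemma linearIndependent_iff_det_ne_zero {n d : ℕ} (C : Fin n → Fin d → ℝ) :
    LinearIndependent ℝ (fun i => WithLp.toLp 2 (C i)) ↔
      (Matrix.of C * (Matrix.of C)ᵀ).det ≠ 0 := by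
  rw [← gram_toLp, ← Matrix.posDef_gram_iff_linearIndependent (𝕜 := ℝ),
    (Matrix.posSemidef_gram ℝ _).posDef_iff_det_ne_zero]

lemma measurableSet_linearIndependent (n d : ℕ) :
    MeasurableSet {C : Fin n → Fin d → ℝ | LinearIndependent ℝ (fun i => WithLp.toLp 2 (C i))} := by
  simp_rw [linearIndependent_iff_det_ne_zero]
  have hc : Continuous fun C : Fin n → Fin d → ℝ => (Matrix.of C * (Matrix.of C)ᵀ).det :=
    (Continuous.matrix_mul continuous_id (Continuous.matrix_transpose continuous_id)).matrix_det
  exact (hc.measurable (measurableSet_singleton 0)).compl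

lemma toLp_cons {n d : ℕ} (c : Fin d → ℝ) (R : Fin n → Fin d → ℝ) :
    (fun i => WithLp.toLp 2 ((Fin.cons c R : Fin (n + 1) → Fin d → ℝ) i)) =
      (Fin.cons (WithLp.toLp 2 c) (fun i => WithLp.toLp 2 (R i)) :
        Fin (n + 1) → EuclideanSpace ℝ (Fin d)) := by
  funext i
  cases i using Fin.cases <;> rfl

/-- A Gaussian matrix is a Gaussian first row on top of an independent Gaussian matrix. -/
lemma map_cons_gaussMatrix (n d : ℕ) :
    ((Measure.pi fun _ : Fin d => gaussianReal 0 1).prod (gaussMatrix n d)).map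
      (fun q => (Fin.cons q.1 q.2 : Fin (n + 1) → Fin d → ℝ)) = gaussMatrix (n + 1) d := by
  have := (measurePreserving_piFinSuccAbove
    (fun _ : Fin (n + 1) => Measure.pi fun _ : Fin d => gaussianReal 0 1) 0).symm.map_eq
  refine Eq.trans ?_ this
  congr 1
  funext q
  exact (Fin.insertNth_zero' q.1 q.2).symm

lemma measurable_cons (n d : ℕ) : Measurable
    (fun q : (Fin d → ℝ) × (Fin n → Fin d → ℝ) => (Fin.cons q.1 q.2 : Fin (n + 1) → Fin d → ℝ)) := by
  refine measurable_pi_lambda _ fun i => ?_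
  cases i using Fin.cases
  · simpa using measurable_fst
  · simp only [Fin.cons_succ]; fun_prop

/-- The rows of a Gaussian matrix with at most as many rows as columns are almost surely linearly
independent. -/
lemma ae_linearIndependent (n d : ℕ) (h : n ≤ d) :
    ∀ᵐ C ∂gaussMatrix n d, LinearIndependent ℝ (fun i => WithLp.toLp 2 (C i)) := by
  induction n with
  | zero => exact ae_of_all _ fun C => linearIndependent_empty_type
  | succ n ih =>
    have hS := measurableSet_linearIndependent (n + 1) d
    have hp : MeasurableSet {q : (Fin d → ℝ) × (Fin n → Fin d → ℝ) | LinearIndependent ℝ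
        (fun i => WithLp.toLp 2 ((Fin.cons q.1 q.2 : Fin (n + 1) → Fin d → ℝ) i))} :=
      measurable_cons n d hS
    rw [← map_cons_gaussMatrix, ae_map_iff (measurable_cons n d).aemeasurable hS,
      Measure.ae_prod_iff_ae_ae hp, Measure.ae_ae_comm hp]
    filter_upwards [ih (by omega)] with R hR
    have hfr : Module.finrank ℝ (Submodule.span ℝ (Set.range fun i => WithLp.toLp 2 (R i))) < d := by
      rw [finrank_span_eq_card hR, Fintype.card_fin]
      omega
    filter_upwards [ae_notMem_of_finrank_lt _ hfr] with c hc
    rw [toLp_cons, linearIndependent_finCons]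
    exact ⟨hR, hc⟩

/-! ### The norm ratio as a squared distance -/

/-- If `y` lies in `span {c} + V`, is orthogonal to `V` and has inner product `s ≠ 0` with `c`, then
`y` is a multiple of the projection `P c` of `c` onto `Vᗮ`, namely `(s / ‖P c‖²) P c`. -/
lemma div_norm_sq_eq {E : Type*} [NormedAddCommGroup E] [InnerProductSpace ℝ E]
    (V : Submodule ℝ E) [V.HasOrthogonalProjection] {c y v : E} {α s : ℝ} (hs : s ≠ 0)
    (hv : v ∈ V) (hy : y = α • c + v) (hyV : y ∈ Vᗮ) (hyc : inner ℝ y c = s) :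
    s ^ 2 / ‖y‖ ^ 2 = ‖Vᗮ.starProjection c‖ ^ 2 := by
  have hP : y = α • Vᗮ.starProjection c := by
    rw [← Submodule.starProjection_eq_self_iff.2 hyV, hy, map_add, map_smul,
      Submodule.starProjection_orthogonal_apply_eq_zero hv, add_zero]
  have hsP : s = α * ‖Vᗮ.starProjection c‖ ^ 2 := by
    rw [← hyc, ← Submodule.starProjection_eq_self_iff.2 hyV,
      Submodule.inner_starProjection_left_eq_right]
    nth_rewrite 1 [hP]
    rw [real_inner_smul_left, real_inner_self_eq_norm_sq]
  have hα : α ≠ 0 := by rintro rfl; exact hs (by linarith)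
  have hn : ‖Vᗮ.starProjection c‖ ≠ 0 := by intro h; rw [h] at hsP; exact hs (by linarith)
  rw [hP, norm_smul, mul_pow, Real.norm_eq_abs, sq_abs, hsP]
  field_simp

lemma euclNorm_eq_norm {k : ℕ} (y : Fin k → ℝ) : euclNorm y = ‖WithLp.toLp 2 y‖ := by
  simp [euclNorm, EuclideanSpace.norm_eq]

/-- The quantity `‖z‖² / ‖Bᵀ (B Bᵀ)⁻¹ z‖²` attached to a matrix `B`, given by its rows. -/
noncomputable def normRatio {n d : ℕ} (z : Fin n → ℝ) (B : Fin n → Fin d → ℝ) : ℝ :=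
  euclNorm z ^ 2 /
    euclNorm ((Matrix.of B)ᵀ *ᵥ ((Matrix.of B * (Matrix.of B)ᵀ)⁻¹ *ᵥ z)) ^ 2

lemma measurable_normRatio {n d : ℕ} (z : Fin n → ℝ) :
    Measurable (normRatio z : (Fin n → Fin d → ℝ) → ℝ) := by
  have hG : Continuous fun B : Fin n → Fin d → ℝ => Matrix.of B * (Matrix.of B)ᵀ :=
    Continuous.matrix_mul continuous_id (Continuous.matrix_transpose continuous_id)
  have hadj : Continuous fun B : Fin n → Fin d → ℝ =>
      (Matrix.of B)ᵀ *ᵥ ((Matrix.of B * (Matrix.of B)ᵀ).adjugate *ᵥ z) :=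
    Continuous.matrix_mulVec (Continuous.matrix_transpose continuous_id)
      (Continuous.matrix_mulVec hG.matrix_adjugate continuous_const)
  have hdet := hG.matrix_det.measurable
  have hy : Measurable fun B : Fin n → Fin d → ℝ =>
      (Matrix.of B)ᵀ *ᵥ ((Matrix.of B * (Matrix.of B)ᵀ)⁻¹ *ᵥ z) := by
    -- The inverse is the adjugate over the determinant; real inversion is measurable also at `0`.
    simp_rw [Matrix.inv_def, Ring.inverse_eq_inv', Matrix.smul_mulVec, Matrix.mulVec_smul]
    exact hdet.inv.smul hadj.measurable
  have he : Measurable (euclNorm : (Fin d → ℝ) → ℝ) := by unfold euclNorm; fun_prop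
  exact ((he.comp hy).pow_const 2).const_div _

/-- If `O` is orthogonal and maps `z` to `s e₀`, then for `B = Oᵀ C` with linearly independent rows,
the ratio `‖z‖² / ‖Bᵀ (B Bᵀ)⁻¹ z‖²` is the squared distance of the first row `c` of `C` to the span
of the other rows `R`: the vector `y = Bᵀ (B Bᵀ)⁻¹ z` lies in the row space of `C` and satisfies
`C y = s e₀`. -/
lemma normRatio_eq {n d : ℕ} (O : Matrix (Fin (n + 1)) (Fin (n + 1)) ℝ) (hO : O * Oᵀ = 1)
    {z : Fin (n + 1) → ℝ} {s : ℝ} (hs : s ≠ 0) (hsz : euclNorm z = s)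
    (hz : O *ᵥ z = Pi.single 0 s)
    (c : Fin d → ℝ) (R : Fin n → Fin d → ℝ)
    (hC : LinearIndependent ℝ
      (fun i => WithLp.toLp 2 ((Fin.cons c R : Fin (n + 1) → Fin d → ℝ) i))) :
    normRatio z (fun i j => (Oᵀ * Matrix.of (Fin.cons c R : Fin (n + 1) → Fin d → ℝ)) i j) =
      ‖(Submodule.span ℝ (Set.range fun i => WithLp.toLp 2 (R i)))ᗮ.starProjection
        (WithLp.toLp 2 c)‖ ^ 2 := by
  set C : Matrix (Fin (n + 1)) (Fin d) ℝ := Matrix.of (Fin.cons c R) with hCdef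
  have hdet : (C * Cᵀ).det ≠ 0 := (linearIndependent_iff_det_ne_zero _).1 hC
  have hO' : Oᵀ * O = 1 := mul_eq_one_comm.1 hO
  set B : Matrix (Fin (n + 1)) (Fin d) ℝ := Oᵀ * C with hB
  have hOB : O * B = C := by rw [hB, ← Matrix.mul_assoc, hO, Matrix.one_mul]
  have hBt : Bᵀ = Cᵀ * O := by rw [hB, Matrix.transpose_mul, Matrix.transpose_transpose]
  have hBB : B * Bᵀ = Oᵀ * (C * Cᵀ) * O := by rw [hBt, hB]; simp only [Matrix.mul_assoc]
  have hBdet : IsUnit (B * Bᵀ).det := by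
    have : Oᵀ.det * O.det = 1 := by rw [← Matrix.det_mul, hO', Matrix.det_one]
    rw [hBB, Matrix.det_mul, Matrix.det_mul, mul_right_comm, this, one_mul]
    exact hdet.isUnit
  set x := (B * Bᵀ)⁻¹ *ᵥ z with hx
  set y := Bᵀ *ᵥ x with hy
  have hyC : y = Cᵀ *ᵥ (O *ᵥ x) := by rw [hy, hBt, ← Matrix.mulVec_mulVec x]
  have hCy : C *ᵥ y = Pi.single 0 s := by
    rw [← hz, ← hOB, ← Matrix.mulVec_mulVec, hy, Matrix.mulVec_mulVec x B, hx,
      Matrix.mulVec_mulVec z, Matrix.mul_nonsing_inv _ hBdet, Matrix.one_mulVec]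
  have hinner (i : Fin (n + 1)) : inner ℝ (WithLp.toLp 2 y) (WithLp.toLp 2 (C i)) =
      (Pi.single 0 s : Fin (n + 1) → ℝ) i := by
    rw [← hCy, PiLp.inner_apply]
    simp [Matrix.mulVec, dotProduct]
  change euclNorm z ^ 2 / euclNorm y ^ 2 = _
  rw [hsz, euclNorm_eq_norm]
  set w := O *ᵥ x
  refine div_norm_sq_eq _ (α := w 0) (v := ∑ i : Fin n, w i.succ • WithLp.toLp 2 (R i)) hs
    (Submodule.sum_mem _ fun i _ => Submodule.smul_mem _ _ (Submodule.subset_span ⟨i, rfl⟩)) ?_ ?_ ?_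
  · ext j
    rw [hyC]
    simp [Matrix.mulVec, dotProduct, Fin.sum_univ_succ, hCdef, mul_comm]
  · rw [Submodule.mem_orthogonal']
    intro u hu
    induction hu using Submodule.span_induction with
    | mem u hu =>
      obtain ⟨i, rfl⟩ := hu
      exact (hinner i.succ).trans (by simp)
    | zero => simp
    | add a b _ _ ha hb => rw [inner_add_right, ha, hb, add_zero]
    | smul t a _ ha => rw [inner_smul_right, ha, mul_zero]
  · exact (hinner 0).trans (by simp)

/-- There is an orthogonal matrix mapping a given nonzero vector to a multiple of `e₀`. -/
lemma exists_orthogonal_mulVec {n : ℕ} (z : Fin (n + 1) → ℝ) (hz : z ≠ 0) :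
    ∃ O : Matrix (Fin (n + 1)) (Fin (n + 1)) ℝ, O * Oᵀ = 1 ∧
      O *ᵥ z = Pi.single 0 (euclNorm z) := by
  set w : EuclideanSpace ℝ (Fin (n + 1)) := WithLp.toLp 2 z with hw
  have hw0 : ‖w‖ ≠ 0 := by simpa [hw] using hz
  obtain ⟨b, hb⟩ := Orthonormal.exists_orthonormalBasis_extension_of_card_eq (𝕜 := ℝ)
    (E := EuclideanSpace ℝ (Fin (n + 1))) (ι := Fin (n + 1)) (by simp) (s := {0})
    (v := fun _ => ‖w‖⁻¹ • w) (by
      refine ⟨fun i => ?_, fun i j hij => (hij (Subsingleton.elim i j)).elim⟩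
      simp [norm_smul, hw0])
  have hb0 : w = ‖w‖ • b 0 := by rw [hb 0 rfl, smul_smul, mul_inv_cancel₀ hw0, one_smul]
  refine ⟨Matrix.of fun i j => b i j, ?_, ?_⟩
  · ext i j
    have := (orthonormal_iff_ite.1 b.orthonormal) i j
    rw [PiLp.inner_apply] at this
    simpa [Matrix.mul_apply, Matrix.one_apply, mul_comm] using this
  · ext i
    have h1 : ((Matrix.of fun i j => b i j) *ᵥ z) i = inner ℝ (b i) w := by
      rw [PiLp.inner_apply]
      simp [Matrix.mulVec, dotProduct, hw, mul_comm]
    rw [h1, euclNorm_eq_norm, ← hw]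
    conv_lhs => rw [hb0]
    rw [inner_smul_right, orthonormal_iff_ite.1 b.orthonormal, Pi.single_apply]
    simp

/-- Freezing all rows but the first, `normRatio_eq` turns the ratio into the squared distance of a
Gaussian vector to a subspace of dimension `n`, whose law does not depend on that subspace. -/
lemma map_normRatio_gaussMatrix {n d : ℕ} (hn : n + 1 ≤ d) (z : Fin (n + 1) → ℝ) (hz : z ≠ 0) :
    (gaussMatrix (n + 1) d).map (normRatio z) =
      gammaMeasure ((d - n : ℕ) / 2 : ℝ) (1 / 2) := by
  obtain ⟨O, hO, hOz⟩ := exists_orthogonal_mulVec z hz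
  have hs : euclNorm z ≠ 0 := by rw [euclNorm_eq_norm]; simpa using hz
  have hrot : Measurable fun (A : Fin (n + 1) → Fin d → ℝ) (i : Fin (n + 1)) (j : Fin d) =>
      (Oᵀ * Matrix.of A) i j := by
    refine Continuous.measurable ?_
    exact Continuous.matrix_mul continuous_const continuous_id
  have hmeas := ((measurable_normRatio z).comp hrot).comp (measurable_cons n d)
  rw [← map_transpose_mul_gaussMatrix O (mul_eq_one_comm.1 hO),
    Measure.map_map (measurable_normRatio z) hrot, ← map_cons_gaussMatrix,
    Measure.map_map ((measurable_normRatio z).comp hrot) (measurable_cons n d)]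
  ext S hS
  rw [Measure.map_apply hmeas hS, Measure.prod_apply_symm (hmeas hS)]
  -- Conditionally on almost all values of the other rows `R`, the ratio already has the right law.
  have hslice : ∀ᵐ R ∂gaussMatrix n d, (Measure.pi fun _ : Fin d => gaussianReal 0 1)
      ((fun c => (c, R)) ⁻¹' (((normRatio z ∘ fun (A : Fin (n + 1) → Fin d → ℝ) i j =>
        (Oᵀ * Matrix.of A) i j) ∘ fun q => Fin.cons q.1 q.2) ⁻¹' S)) =
      gammaMeasure ((d - n : ℕ) / 2 : ℝ) (1 / 2) S := by
    filter_upwards [ae_linearIndependent n d (by omega)] with R hR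
    have hfr : Module.finrank ℝ (Submodule.span ℝ (Set.range fun i => WithLp.toLp 2 (R i))) = n := by
      rw [finrank_span_eq_card hR, Fintype.card_fin]
    rw [← map_norm_sq_starProjection _ (by rw [hfr]; omega : _ + (d - n) = d) (by omega),
      Measure.map_apply (by fun_prop) hS]
    refine measure_congr ?_
    filter_upwards [ae_notMem_of_finrank_lt _ (by rw [hfr]; omega)] with c hc
    have := normRatio_eq O hO hs rfl hOz c R
      (by rw [toLp_cons, linearIndependent_finCons]; exact ⟨hR, hc⟩)
    change (normRatio z _ ∈ S) = _
    rw [this]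
    rfl
  rw [lintegral_congr_ae hslice]
  simp

/-- If `z* = Uᵀ(x* − p) ≠ 0` then `‖z*‖²/‖y₂*(A)‖²`, where
`y₂*(A) = Bᵀ(B Bᵀ)⁻¹ z*` with `B = Uᵀ A`, is chi-squared distributed with `d − d_e + 1`
degrees of freedom, i.e. Gamma with shape `(d − d_e + 1)/2` and rate `1/2`. -/
theorem stmt2 (D d d_e : ℕ) (h1 : 1 ≤ d_e) (h2 : d_e ≤ d) (h3 : d_e ≤ D)
    (U : Matrix (Fin D) (Fin d_e) ℝ) (hU : Uᵀ * U = 1)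
    (p xstar : Fin D → ℝ)
    (zstar : Fin d_e → ℝ) (hz : zstar = Uᵀ.mulVec (xstar - p)) (hz0 : zstar ≠ 0) :
    (gaussMatrix D d).map (fun A : Fin D → Fin d → ℝ =>
        euclNorm zstar ^ 2 /
          euclNorm ((Uᵀ * Matrix.of A)ᵀ.mulVec
            (((Uᵀ * Matrix.of A) * (Uᵀ * Matrix.of A)ᵀ)⁻¹.mulVec zstar)) ^ 2) =
      gammaMeasure ((d - d_e + 1 : ℕ) / 2 : ℝ) (1 / 2) := by
  obtain ⟨n, rfl⟩ : ∃ n, d_e = n + 1 := ⟨d_e - 1, by omega⟩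
  have hrot : Measurable fun (A : Fin D → Fin d → ℝ) (i : Fin (n + 1)) (j : Fin d) =>
      (Uᵀ * Matrix.of A) i j := by
    refine Continuous.measurable ?_
    exact Continuous.matrix_mul continuous_const continuous_id
  -- The map in question is `normRatio zstar` applied to the matrix `Uᵀ A`, which is Gaussian.
  rw [show d - (n + 1) + 1 = d - n by omega, ← map_normRatio_gaussMatrix h2 zstar hz0,
    ← map_transpose_mul_gaussMatrix U hU, Measure.map_map (measurable_normRatio zstar) hrot]
  rfl
end

section
/- Let D, d, d_e be natural numbers with 1 ≤ d_e, d_e ≤ d and d_e < D, let U be a D×d_e real matrix and V a D×(D−d_e) real matrix with UᵀU = I, VᵀV = I and UᵀV = 0. Let p, x* ∈ ℝ^D with z* := Uᵀ(x* − p) ≠ 0, and let μ be the Gaussian matrix measure on D×d real matrices. Set m = D − d_e and n = d − d_e + 1. Then the pushforward of μ under the map A ↦ w(A) := Vᵀ(A y₂*(A)) ∈ ℝ^m, where B = Uᵀ A and y₂*(A) = Bᵀ(B Bᵀ)⁻¹ z*, equals the measure on ℝ^m with density g(w̄) = (1/(√π · ‖z*‖)^m) · (Γ((m+n)/2)/Γ(n/2))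 · (1 + ‖w̄‖²/‖z*‖²)^{−(m+n)/2} with respect to Lebesgue measure on ℝ^m; i.e. w follows the m-dimensional multivariate t-distribution with n degrees of freedom and scale (‖z*‖²/n)·I. -/
/-!
Write `ζ = ‖z*‖`, `k = d_e - 1` and `n = d - k`. The vector `w` is `C y`, where `C = Vᵀ A` and
`y` is the least-norm solution of `B y = z*`, with `B = Uᵀ A`.

The columns of `U` and `V` together are orthonormal, so by rotation invariance `B` and `C` are
independent Gaussian matrices (`gaussMat_map_blocks`). Moreover `y` does not change when `B` and
`z*` are both multiplied by an orthogonal `Q` (`minNorm_rotate`), and `Q B` is again Gaussian; with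
`Q z* = ζ e₀` (`exists_rotation`) one may assume `z* = ζ e₀`.

In that case `y` is orthogonal to all rows of `B` but the first one `b`, lies in the span of all
rows, and satisfies `⟨b, y⟩ = ζ`. Hence `y = ζ P b / ‖P b‖²`, with `P` the orthogonal projection
onto the complement of the other `k` rows, and `‖y‖² = ζ² / ‖P b‖²` (`sum_sq_minNorm`). Almost
surely these `k` rows are linearly independent (`ae_linearIndependent`), and conditionally on them
`P b`, read in an orthonormal basis of the complement, is a standard Gaussian vector `ξ` of `ℝⁿ`.
Given `y`, the vector `C y` has law `N(0, ‖y‖² I)`, so the law of `w` is the mixture of the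
`N(0, (ζ² / ‖ξ‖²) I)` over a standard Gaussian `ξ` (`lintegral_minNorm`). Integrating the
Gaussian densities over `ξ` in polar coordinates (`integral_radial`) gives the `t`-density
(`lintegral_mixMass`).

Invariance of Gaussian measures is proved by comparing characteristic functions on the dual.
-/

open Matrix MeasureTheory ProbabilityTheory

/-! ### Gaussian vectors and matrices -/

/-- The standard Gaussian measure on `ℝ^ι`. -/
noncomputable def gaussVec (ι : Type*) [Fintype ι] : Measure (ι → ℝ) :=
  Measure.pi fun _ => gaussianReal 0 1

/-- The Gaussian matrix measure over arbitrary finite index types: a matrix is a family of i.i.d.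
standard Gaussian rows. For `Fin D` and `Fin d` it is definitionally `gaussMatrix D d`. -/
noncomputable def gaussMat (ι κ : Type*) [Fintype ι] [Fintype κ] : Measure (ι → κ → ℝ) :=
  Measure.pi fun _ => gaussVec κ

instance (ι : Type*) [Fintype ι] : IsProbabilityMeasure (gaussVec ι) := by
  unfold gaussVec; infer_instance

instance (ι κ : Type*) [Fintype ι] [Fintype κ] : IsProbabilityMeasure (gaussMat ι κ) := by
  unfold gaussMat; infer_instance

lemma charFunDual_gaussReal (v : NNReal) (L : StrongDual ℝ ℝ) :
    charFunDual (gaussianReal 0 v) L = Complex.exp (-((v * (L 1) ^ 2 / 2 : ℝ) : ℂ)) := by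
  rw [charFunDual_eq_charFun_map_one]
  have : (L : ℝ → ℝ) = fun x => (L 1) * x := by
    ext x
    rw [show L x = L (x • 1) by simp, map_smul, smul_eq_mul, mul_comm]
  rw [this, gaussianReal_map_const_mul, charFun_gaussianReal]
  simp
  ring_nf

lemma charFunDual_gaussVec {ι : Type*} [Fintype ι] [DecidableEq ι] (L : StrongDual ℝ (ι → ℝ)) :
    charFunDual (gaussVec ι) L =
      Complex.exp (-(((∑ i, (L (Pi.single i 1)) ^ 2) / 2 : ℝ) : ℂ)) := by
  unfold gaussVec
  rw [charFunDual_pi]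
  simp_rw [charFunDual_gaussReal]
  rw [← Complex.exp_sum]
  congr 1
  push_cast
  rw [Finset.sum_neg_distrib, Finset.sum_div]
  simp

lemma charFunDual_gaussMat {ι κ : Type*} [Fintype ι] [Fintype κ] [DecidableEq ι] [DecidableEq κ]
    (L : StrongDual ℝ (ι → κ → ℝ)) :
    charFunDual (gaussMat ι κ) L =
      Complex.exp (-(((∑ j, ∑ i, (L (Pi.single i (Pi.single j 1))) ^ 2) / 2 : ℝ) : ℂ)) := by
  unfold gaussMat
  rw [charFunDual_pi]
  simp_rw [charFunDual_gaussVec]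
  rw [← Complex.exp_sum]
  congr 1
  rw [Finset.sum_comm]
  push_cast
  rw [Finset.sum_neg_distrib, Finset.sum_div]
  simp

/-- A coisometry preserves sums of squares of coefficient vectors. -/
lemma sum_sq_vecMul {ι κ : Type*} [Fintype ι] [Fintype κ] [DecidableEq κ] (M : Matrix κ ι ℝ)
    (hM : M * Mᵀ = 1) (s : κ → ℝ) :
    ∑ i, (∑ a, M a i * s a) ^ 2 = ∑ a, s a ^ 2 := by
  have h1 : ∑ i, (∑ a, M a i * s a) ^ 2 = (s ᵥ* M) ⬝ᵥ (s ᵥ* M) := by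
    simp only [dotProduct, vecMul, sq, mul_comm]
  have h2 : (s ᵥ* M) ⬝ᵥ (s ᵥ* M) = s ⬝ᵥ s := by
    conv_lhs => rw [← Matrix.mulVec_transpose M s, Matrix.dotProduct_mulVec,
      Matrix.mulVec_transpose, Matrix.vecMul_vecMul, hM, Matrix.vecMul_one]
  rw [h1, h2]
  simp [dotProduct, sq]

/-- The image of a standard Gaussian vector under a matrix with orthonormal rows is standard
Gaussian. -/
lemma gaussVec_map_mulVec {ι κ : Type*} [Fintype ι] [Fintype κ] [DecidableEq κ]
    (M : Matrix κ ι ℝ) (hM : M * Mᵀ = 1) :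
    (gaussVec ι).map (fun x => M *ᵥ x) = gaussVec κ := by
  classical
  let T : (ι → ℝ) →L[ℝ] (κ → ℝ) := LinearMap.toContinuousLinearMap (Matrix.mulVecLin M)
  have hT : (fun x => M *ᵥ x) = T := by ext x; simp [T]
  have : IsProbabilityMeasure ((gaussVec ι).map T) :=
    Measure.isProbabilityMeasure_map T.continuous.measurable.aemeasurable
  rw [hT]
  apply Measure.ext_of_charFunDual
  ext L
  rw [charFunDual_map, charFunDual_gaussVec, charFunDual_gaussVec,
    ← sum_sq_vecMul M hM (fun a => L (Pi.single a 1))]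
  have : ∀ i, (L.comp T) (Pi.single i 1) = ∑ a, M a i * L (Pi.single a 1) := by
    intro i
    have h : T (Pi.single i 1) = ∑ a, M a i • Pi.single a (1:ℝ) := by
      ext a; simp [T, Finset.sum_apply, Pi.single_apply]
    rw [ContinuousLinearMap.comp_apply, h]
    simp
  simp_rw [this]

lemma gaussVec_map_dot {ι : Type*} [Fintype ι] (y : ι → ℝ) :
    (gaussVec ι).map (fun x => x ⬝ᵥ y) = gaussianReal 0 (∑ i, y i ^ 2).toNNReal := by
  classical
  let T : (ι → ℝ) →L[ℝ] ℝ := ∑ i, y i • ContinuousLinearMap.proj i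
  have hT : (fun x => x ⬝ᵥ y) = T := by
    ext x; simp [T, dotProduct, mul_comm]
  have : IsProbabilityMeasure ((gaussVec ι).map T) :=
    Measure.isProbabilityMeasure_map T.continuous.measurable.aemeasurable
  rw [hT]
  apply Measure.ext_of_charFunDual
  ext L
  rw [charFunDual_map, charFunDual_gaussVec, charFunDual_gaussReal]
  have : ∀ i, (L.comp T) (Pi.single i 1) = y i * L 1 := by
    intro i
    have h : T (Pi.single i 1) = y i • 1 := by
      simp [T, Pi.single_apply]
    rw [ContinuousLinearMap.comp_apply, h, map_smul, smul_eq_mul]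
  simp_rw [this, mul_pow]
  rw [Real.coe_toNNReal _ (by positivity), Finset.sum_mul]

/-- Left multiplication by a matrix with orthonormal rows sends Gaussian matrices to Gaussian
matrices. The product is written out entrywise because the measure lives on functions, whose
measurable structure `Matrix` does not expose. -/
lemma gaussMat_map_mul {ι κ ι' : Type*} [Fintype ι] [Fintype κ] [Fintype ι'] [DecidableEq ι']
    (M : Matrix ι' ι ℝ) (hM : M * Mᵀ = 1) :
    (gaussMat ι κ).map (fun (A : ι → κ → ℝ) i j => ∑ a, M i a * A a j)
      = gaussMat ι' κ := by
  classical
  let T : (ι → κ → ℝ) →L[ℝ] (ι' → κ → ℝ) := LinearMap.toContinuousLinearMap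
    { toFun := fun A i j => ∑ a, M i a * A a j
      map_add' := fun A B => by
        ext i j; simp [mul_add, Finset.sum_add_distrib]
      map_smul' := fun c A => by
        ext i j; simp [Finset.mul_sum, mul_left_comm] }
  have hT : (fun (A : ι → κ → ℝ) i j => ∑ a, M i a * A a j) = T := rfl
  have : IsProbabilityMeasure ((gaussMat ι κ).map T) :=
    Measure.isProbabilityMeasure_map T.continuous.measurable.aemeasurable
  rw [hT]
  apply Measure.ext_of_charFunDual
  ext L
  rw [charFunDual_map, charFunDual_gaussMat, charFunDual_gaussMat]
  have : ∀ i j, (L.comp T) (Pi.single i (Pi.single j 1)) =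
      ∑ a, M a i * L (Pi.single a (Pi.single j 1)) := by
    intro i j
    have h : T (Pi.single i (Pi.single j 1)) =
        ∑ a, M a i • Pi.single a (Pi.single j (1:ℝ)) := by
      ext a b
      simp [T, Finset.sum_apply, Pi.single_apply, ite_apply]
    rw [ContinuousLinearMap.comp_apply, h]
    simp
  simp_rw [this, sum_sq_vecMul M hM]

/-- For a Gaussian matrix `C` and a fixed `y`, the vector `C y` has law `N(0, ‖y‖² I)`. -/
lemma gaussMat_map_mulVec {ι κ : Type*} [Fintype ι] [Fintype κ] (y : κ → ℝ) :
    (gaussMat ι κ).map (fun C i => C i ⬝ᵥ y) =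
      Measure.pi (fun _ : ι => gaussianReal 0 (∑ i, y i ^ 2).toNNReal) := by
  unfold gaussMat
  simp_rw [← gaussVec_map_dot y]
  have : IsProbabilityMeasure ((gaussVec κ).map (fun x => x ⬝ᵥ y)) := by
    rw [gaussVec_map_dot]; infer_instance
  refine Measure.pi_map_pi (f := fun _ x => x ⬝ᵥ y) fun i => ?_
  exact (by unfold dotProduct; fun_prop : Measurable fun x : κ → ℝ => x ⬝ᵥ y).aemeasurable

lemma pi_gaussian_eq {ι : Type*} [Fintype ι] {v : NNReal} (hv : v ≠ 0) :
    Measure.pi (fun _ : ι => gaussianReal 0 v) =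
      volume.withDensity (fun w : ι → ℝ => ENNReal.ofReal
        ((√(2 * Real.pi * v))⁻¹ ^ Fintype.card ι * Real.exp (-(∑ i, w i ^ 2) / (2 * v)))) := by
  have hd : (fun w : ι → ℝ => ENNReal.ofReal
        ((√(2 * Real.pi * v))⁻¹ ^ Fintype.card ι * Real.exp (-(∑ i, w i ^ 2) / (2 * v)))) =
      fun w => ∏ i, gaussianPDF 0 v (w i) := by
    ext w
    simp only [gaussianPDF, gaussianPDFReal]
    rw [← ENNReal.ofReal_prod_of_nonneg (fun i _ => by positivity), Finset.prod_mul_distrib,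
      ← Real.exp_sum, ← Finset.sum_div]
    simp
  rw [hd]
  refine Measure.pi_eq fun s hs => ?_
  rw [withDensity_apply _ (.univ_pi hs), volume_pi, Measure.restrict_pi_pi]
  have hi : ∀ i : ι, Integrable (gaussianPDFReal 0 v) (volume.restrict (s i)) :=
    fun i => (integrable_gaussianPDFReal 0 v).restrict
  simp_rw [gaussianReal_of_var_ne_zero _ hv]
  simp_rw [withDensity_apply _ (hs _)]
  simp only [gaussianPDF]
  simp_rw [← ENNReal.ofReal_prod_of_nonneg
    (fun i (_ : i ∈ Finset.univ) => gaussianPDFReal_nonneg 0 v _)]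
  rw [← ofReal_integral_eq_lintegral_ofReal (Integrable.fintype_prod hi)
    (Filter.Eventually.of_forall fun w => Finset.prod_nonneg
      fun i _ => gaussianPDFReal_nonneg 0 v _),
    integral_fintype_prod_eq_prod,
    ENNReal.ofReal_prod_of_nonneg
      (fun i _ => integral_nonneg fun w => gaussianPDFReal_nonneg 0 v _)]
  refine Finset.prod_congr rfl fun i _ => ?_
  rw [← ofReal_integral_eq_lintegral_ofReal (hi i)
    (Filter.Eventually.of_forall fun w => gaussianPDFReal_nonneg 0 v _)]

/-! ### Orthogonal complements, rotations and least-norm solutions -/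

lemma mem_span_rows_iff {k d : ℕ} (B : Matrix (Fin k) (Fin d) ℝ) (x : Fin d → ℝ) :
    x ∈ Submodule.span ℝ (Set.range fun i => B i) ↔ ∃ c : Fin k → ℝ, c ᵥ* B = x := by
  rw [Submodule.mem_span_range_iff_exists_fun]
  refine exists_congr fun c => ?_
  rw [Matrix.vecMul_eq_sum]

/-- The rows of `F` are an orthonormal basis of the orthogonal complement of the rows of `B`; the
last clause says that a vector killed by `F` lies in the row space of `B`. -/
lemma exists_complement {k d : ℕ} (B : Matrix (Fin k) (Fin d) ℝ)
    (hB : LinearIndependent ℝ (fun i => B i)) :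
    ∃ F : Matrix (Fin (d - k)) (Fin d) ℝ, F * Fᵀ = 1 ∧ F * Bᵀ = 0 ∧
      ∀ x, F *ᵥ x = 0 → ∃ c : Fin k → ℝ, c ᵥ* B = x := by
  let e := (WithLp.linearEquiv 2 ℝ (Fin d → ℝ)).symm
  let v : Fin k → EuclideanSpace ℝ (Fin d) := fun i => e (B i)
  have hv : LinearIndependent ℝ v := hB.map' e.toLinearMap e.ker
  let S := Submodule.span ℝ (Set.range v)
  have hS : Module.finrank ℝ S = k := by
    simpa using finrank_span_eq_card hv
  have hSo : Module.finrank ℝ Sᗮ = d - k := by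
    have := S.finrank_add_finrank_orthogonal
    rw [hS, finrank_euclideanSpace, Fintype.card_fin] at this
    omega
  let b : OrthonormalBasis (Fin (d - k)) ℝ Sᗮ :=
    (stdOrthonormalBasis ℝ Sᗮ).reindex (finCongr hSo)
  have hdot : ∀ x y : EuclideanSpace ℝ (Fin d), inner ℝ x y = x.ofLp ⬝ᵥ y.ofLp := by
    intro x y
    rw [EuclideanSpace.inner_eq_star_dotProduct, dotProduct_comm]
    simp
  refine ⟨Matrix.of fun j => (b j : EuclideanSpace ℝ (Fin d)).ofLp, ?_, ?_, ?_⟩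
  · ext i j
    have := orthonormal_iff_ite.mp b.orthonormal i j
    rw [Submodule.coe_inner, hdot] at this
    rw [Matrix.mul_apply', Matrix.one_apply]
    exact this
  · ext i j
    have := (Submodule.mem_orthogonal' S _).mp (b i).2 (v j)
      (Submodule.subset_span (Set.mem_range_self j))
    rw [hdot] at this
    rw [Matrix.mul_apply']
    exact this
  · intro x hx
    rw [← mem_span_rows_iff]
    have hxS : e x ∈ Sᗮᗮ := by
      rw [Submodule.mem_orthogonal]
      intro u hu
      have h0 : ∀ j, inner ℝ (b j : EuclideanSpace ℝ (Fin d)) (e x) = 0 := fun j => by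
        rw [hdot]; exact congrFun hx j
      have hsum := b.sum_repr ⟨u, hu⟩
      have : u = ∑ j, (b.repr ⟨u, hu⟩).ofLp j • (b j : EuclideanSpace ℝ (Fin d)) := by
        have := congrArg Subtype.val hsum
        simpa using this.symm
      rw [this, sum_inner]
      simp [inner_smul_left, h0]
    rw [Submodule.orthogonal_orthogonal] at hxS
    have h2 := Submodule.mem_map_of_mem (f := e.symm.toLinearMap) hxS
    rw [Submodule.map_span, ← Set.range_comp] at h2
    simpa [v, Function.comp_def] using h2

lemma isUnit_gram {ι κ : Type*} [Fintype ι] [Fintype κ] [DecidableEq ι] (B : Matrix ι κ ℝ)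
    (hB : LinearIndependent ℝ (fun i => B i)) : IsUnit (B * Bᵀ).det := by
  have h := Matrix.PosDef.mul_conjTranspose_self B (Matrix.vecMul_injective_iff.mpr hB)
  rw [Matrix.conjTranspose_eq_transpose_of_trivial] at h
  exact h.det_pos.ne'.isUnit

/-- The least-norm solution `Mᵀ (M Mᵀ)⁻¹ z` of `M y = z`, when the rows of `M` are linearly
independent; otherwise the inverse is `0`, and so is the value. -/
noncomputable def minNorm {ι κ : Type*} [Fintype ι] [DecidableEq ι] [Fintype κ]
    (M : Matrix ι κ ℝ) (z : ι → ℝ) : κ → ℝ := Mᵀ *ᵥ ((M * Mᵀ)⁻¹ *ᵥ z)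

/-- The least-norm solution of `M y = ζ e₀` has squared norm `ζ² / ‖F b‖²`, where `b` is the first
row of `M` and the rows of `F` are an orthonormal basis of the complement of its other rows. -/
lemma sum_sq_minNorm {k d r : ℕ} (B : Matrix (Fin k) (Fin d) ℝ)
    (hB : LinearIndependent ℝ (fun i => B i)) (F : Matrix (Fin r) (Fin d) ℝ)
    (hF : F * Fᵀ = 1) (hFB : F * Bᵀ = 0)
    (hx : ∀ x, F *ᵥ x = 0 → ∃ c : Fin k → ℝ, c ᵥ* B = x)
    (b : Fin d → ℝ) (hb : F *ᵥ b ≠ 0) (ζ : ℝ) (M : Matrix (Fin (k + 1)) (Fin d) ℝ)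
    (hM : M = Matrix.of (Fin.cons b B : Fin (k + 1) → Fin d → ℝ)) :
    ∑ i, minNorm M (Pi.single 0 ζ) i ^ 2 = ζ ^ 2 / ∑ i, (F *ᵥ b) i ^ 2 := by
  have hBF : B * Fᵀ = 0 := by
    rw [← Matrix.transpose_eq_zero, Matrix.transpose_mul, Matrix.transpose_transpose, hFB]
  have hMLI : LinearIndependent ℝ (fun i => M i) := by
    have : (fun i => M i) = (Fin.cons b (fun i => B i) : Fin (k + 1) → Fin d → ℝ) := by
      rw [hM]; rfl
    rw [this, linearIndependent_finCons]
    refine ⟨hB, fun hmem => hb ?_⟩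
    obtain ⟨c, rfl⟩ := (mem_span_rows_iff B b).mp hmem
    rw [← Matrix.mulVec_transpose, Matrix.mulVec_mulVec, hFB, Matrix.zero_mulVec]
  have hdet := isUnit_gram M hMLI
  set q := ∑ i, (F *ᵥ b) i ^ 2 with hq
  have hqd : q = (F *ᵥ b) ⬝ᵥ (F *ᵥ b) := by simp [hq, dotProduct, sq]
  have hq0 : q ≠ 0 := by
    rw [hqd]; exact fun h => hb (dotProduct_self_eq_zero.mp h)
  have hbb : b ⬝ᵥ (Fᵀ *ᵥ (F *ᵥ b)) = q := by
    rw [Matrix.dotProduct_mulVec, Matrix.vecMul_transpose, hqd]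
  -- `Fᵀ F` is the orthogonal projection onto the complement of the rows of `B`.
  set y : Fin d → ℝ := (ζ / q) • (Fᵀ *ᵥ (F *ᵥ b)) with hy
  have hMy : M *ᵥ y = Pi.single 0 ζ := by
    rw [hy, Matrix.mulVec_smul]
    ext i
    refine Fin.cases ?_ (fun j => ?_) i
    · have : (M *ᵥ (Fᵀ *ᵥ (F *ᵥ b))) 0 = q := by rw [hM]; exact hbb
      rw [Pi.smul_apply, this, Pi.single_eq_same, smul_eq_mul, div_mul_cancel₀ _ hq0]
    · have : (M *ᵥ (Fᵀ *ᵥ (F *ᵥ b))) j.succ = 0 := by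
        have h2 : (B *ᵥ (Fᵀ *ᵥ (F *ᵥ b))) j = 0 := by
          rw [Matrix.mulVec_mulVec, hBF, Matrix.zero_mulVec]; rfl
        rw [hM]; exact h2
      rw [Pi.smul_apply, this, smul_zero, Pi.single_eq_of_ne (Fin.succ_ne_zero j)]
  obtain ⟨c, hc⟩ : ∃ c, Mᵀ *ᵥ c = y := by
    obtain ⟨c, hc⟩ := hx (b - Fᵀ *ᵥ (F *ᵥ b)) (by
      rw [Matrix.mulVec_sub, Matrix.mulVec_mulVec _ F Fᵀ, hF, Matrix.one_mulVec, sub_self])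
    refine ⟨(ζ / q) • Fin.cons 1 (-c), ?_⟩
    rw [Matrix.mulVec_smul, hy]
    congr 1
    have : Fᵀ *ᵥ (F *ᵥ b) = b - c ᵥ* B := by rw [hc]; abel
    rw [this, Matrix.mulVec_transpose, Matrix.vecMul_eq_sum, Fin.sum_univ_succ,
      Matrix.vecMul_eq_sum, hM]
    simp [sub_eq_add_neg]
    rfl
  -- On the row space of `M` the map `Mᵀ (M Mᵀ)⁻¹ M` is the identity.
  have hyy : minNorm M (Pi.single 0 ζ) = y := by
    rw [minNorm, ← hMy, ← hc, Matrix.mulVec_mulVec _ M Mᵀ, Matrix.mulVec_mulVec _ _ (M * Mᵀ),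
      Matrix.nonsing_inv_mul _ hdet, Matrix.one_mulVec]
  have hs : ∑ i, y i ^ 2 = y ⬝ᵥ y := by simp [dotProduct, sq]
  rw [hyy, hs, hy, dotProduct_smul, smul_dotProduct, Matrix.dotProduct_mulVec,
    Matrix.vecMul_transpose, Matrix.mulVec_mulVec _ F Fᵀ, hF, Matrix.one_mulVec, ← hqd]
  simp only [smul_eq_mul]
  field_simp

lemma euclNorm_sq {k : ℕ} (y : Fin k → ℝ) : euclNorm y ^ 2 = ∑ i, y i ^ 2 :=
  Real.sq_sqrt (Finset.sum_nonneg fun _ _ => sq_nonneg _)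

lemma euclNorm_pos {k : ℕ} {y : Fin k → ℝ} (hy : y ≠ 0) : 0 < euclNorm y := by
  apply Real.sqrt_pos.mpr
  have : ∑ i, y i ^ 2 = y ⬝ᵥ y := by simp [dotProduct, sq]
  rw [this]
  exact lt_of_le_of_ne (by rw [← this]; positivity)
    (fun h => hy (dotProduct_self_eq_zero.mp h.symm))

lemma exists_rotation {k : ℕ} (z : Fin (k + 1) → ℝ) (hz : z ≠ 0) :
    ∃ Q : Matrix (Fin (k + 1)) (Fin (k + 1)) ℝ, Q * Qᵀ = 1 ∧
      Q *ᵥ z = Pi.single 0 (euclNorm z) := by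
  -- The rows of `Q` form an orthonormal basis that extends the unit vector `u = z / ‖z‖`.
  have hdot : ∀ x y : EuclideanSpace ℝ (Fin (k+1)), inner ℝ x y = x.ofLp ⬝ᵥ y.ofLp := by
    intro x y
    rw [EuclideanSpace.inner_eq_star_dotProduct, dotProduct_comm]
    simp
  have hn := euclNorm_pos hz
  have hzz : z ⬝ᵥ z = euclNorm z ^ 2 := by rw [euclNorm_sq]; simp [dotProduct, sq]
  let u : EuclideanSpace ℝ (Fin (k + 1)) := WithLp.toLp 2 ((euclNorm z)⁻¹ • z)
  have hu : ‖u‖ = 1 := by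
    have : ‖u‖ ^ 2 = 1 := by
      rw [← real_inner_self_eq_norm_sq, hdot]
      simp only [u, dotProduct_smul, smul_dotProduct, hzz, smul_eq_mul]
      field_simp
    nlinarith [norm_nonneg u]
  have ho : Orthonormal ℝ (({0} : Set (Fin (k + 1))).domRestrict
      (fun _ => u : Fin (k + 1) → EuclideanSpace ℝ (Fin (k + 1)))) := by
    constructor
    · intro i; exact hu
    · intro i j hij
      exact absurd (Subsingleton.elim i j) hij
  obtain ⟨b, hb⟩ := ho.exists_orthonormalBasis_extension_of_card_eq (by simp)
  have hb0 : b 0 = u := hb 0 rfl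
  have hort : ∀ i j, (b i).ofLp ⬝ᵥ (b j).ofLp = if i = j then 1 else 0 := fun i j => by
    rw [← hdot]; exact orthonormal_iff_ite.mp b.orthonormal i j
  refine ⟨Matrix.of fun i => (b i).ofLp, ?_, ?_⟩
  · ext i j
    rw [Matrix.mul_apply', Matrix.one_apply]
    exact hort i j
  · have hzu : z = euclNorm z • (b 0).ofLp := by
      rw [hb0]; simp [u, smul_smul, hn.ne']
    ext i
    have h1 : (b i).ofLp ⬝ᵥ z = euclNorm z * if i = 0 then 1 else 0 := by
      conv_lhs => rw [hzu]
      rw [dotProduct_smul, hort, smul_eq_mul]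
    change (b i).ofLp ⬝ᵥ z = _
    rw [h1, Pi.single_apply]
    simp

lemma minNorm_rotate {ι κ : Type*} [Fintype ι] [DecidableEq ι] [Fintype κ]
    (Q : Matrix ι ι ℝ) (hQ : Q * Qᵀ = 1) (B : Matrix ι κ ℝ) (z : ι → ℝ) :
    minNorm (Q * B) (Q *ᵥ z) = minNorm B z := by
  have hQ' : Qᵀ * Q = 1 := mul_eq_one_comm.mp hQ
  have h : Q * B * (Q * B)ᵀ = Q * (B * Bᵀ) * Qᵀ := by
    rw [Matrix.transpose_mul]; simp only [Matrix.mul_assoc]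
  unfold minNorm
  rw [h, Matrix.mul_inv_rev, Matrix.mul_inv_rev, Matrix.inv_eq_right_inv hQ,
    Matrix.inv_eq_right_inv hQ', Matrix.transpose_mul, Matrix.mulVec_mulVec, Matrix.mulVec_mulVec,
    Matrix.mulVec_mulVec]
  congr 1
  calc Bᵀ * Qᵀ * (Q * ((B * Bᵀ)⁻¹ * Qᵀ)) * Q
      = Bᵀ * ((Qᵀ * Q) * (B * Bᵀ)⁻¹ * (Qᵀ * Q)) := by simp only [Matrix.mul_assoc]
    _ = Bᵀ * (B * Bᵀ)⁻¹ := by rw [hQ', Matrix.one_mul, Matrix.mul_one]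

/-! ### Integrating the Gaussian mixture -/

/-- A radial integral, by polar coordinates. The Euclidean norm is spelled out because the
norm of `Fin n → ℝ` is the supremum norm. -/
lemma integral_radial {n : ℕ} (hn : 0 < n) (m : ℕ) {b : ℝ} (hb : 0 < b) :
    ∫⁻ ξ : Fin n → ℝ, ENNReal.ofReal (√(∑ i, ξ i ^ 2) ^ m * Real.exp (-b * ∑ i, ξ i ^ 2)) =
      ENNReal.ofReal (√Real.pi ^ n * (Real.Gamma (((m : ℝ) + n) / 2) / Real.Gamma ((n : ℝ) / 2)) *
        b ^ (-(((m : ℝ) + n) / 2))) := by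
  have : Nonempty (Fin n) := ⟨⟨0, hn⟩⟩
  have hn' : (0 : ℝ) < n := by exact_mod_cast hn
  set f : ℝ → ℝ := fun r => r ^ m * Real.exp (-b * r ^ 2) with hf
  have hint1 : ∀ r ∈ Set.Ioi (0 : ℝ), r ^ (n - 1) • f r =
      r ^ (((m + n : ℕ) : ℝ) - 1) * Real.exp (-b * r ^ (2 : ℝ)) := by
    intro r hr
    have hr : 0 < r := hr
    have : r ^ (((m + n : ℕ) : ℝ) - 1) = r ^ (m + n - 1) := by
      rw [← Real.rpow_natCast, Nat.cast_sub (by omega)]; simp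
    rw [this, Real.rpow_two, show m + n - 1 = (n - 1) + m by omega, pow_add, hf, smul_eq_mul]
    ring
  have hq : (-1 : ℝ) < ((m + n : ℕ) : ℝ) - 1 := by
    push_cast
    linarith [(Nat.cast_nonneg m : (0:ℝ) ≤ m)]
  have hfin : Module.finrank ℝ (EuclideanSpace ℝ (Fin n)) = n := by simp
  have hI : Integrable (fun x : EuclideanSpace ℝ (Fin n) => f ‖x‖) := by
    rw [integrable_fun_norm_addHaar, hfin, integrableOn_congr_fun hint1 measurableSet_Ioi]
    exact integrableOn_rpow_mul_exp_neg_mul_rpow hq (by norm_num) hb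
  have hval : ∫ x : EuclideanSpace ℝ (Fin n), f ‖x‖ =
      √Real.pi ^ n * (Real.Gamma (((m : ℝ) + n) / 2) / Real.Gamma ((n : ℝ) / 2)) *
        b ^ (-(((m : ℝ) + n) / 2)) := by
    have hG : Real.Gamma ((n : ℝ) / 2) ≠ 0 := (Real.Gamma_pos_of_pos (by positivity)).ne'
    rw [integral_fun_norm_addHaar, hfin, setIntegral_congr_fun measurableSet_Ioi hint1,
      integral_rpow_mul_exp_neg_mul_rpow (by norm_num) hq hb, Measure.real,
      EuclideanSpace.volume_ball, Fintype.card_fin, Real.Gamma_add_one (by positivity)]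
    rw [ENNReal.ofReal_one, one_pow, one_mul, ENNReal.toReal_ofReal (by
      have := Real.Gamma_pos_of_pos (show 0 < (n : ℝ) / 2 by positivity)
      positivity)]
    have e1 : -(((m + n : ℕ) : ℝ) - 1 + 1) / 2 = -(((m : ℝ) + n) / 2) := by push_cast; ring
    have e2 : (((m + n : ℕ) : ℝ) - 1 + 1) / 2 = ((m : ℝ) + n) / 2 := by push_cast; ring
    rw [e1, e2, nsmul_eq_mul, smul_eq_mul]
    field_simp
  have hsq : ∀ x : EuclideanSpace ℝ (Fin n), √(∑ i, x.ofLp i ^ 2) = ‖x‖ := fun x => by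
    rw [EuclideanSpace.norm_eq]; simp
  rw [← hval, ofReal_integral_eq_lintegral_ofReal hI
    (Filter.Eventually.of_forall fun x => by positivity),
    ← (PiLp.volume_preserving_ofLp (Fin n)).lintegral_comp (by fun_prop)]
  refine lintegral_congr fun x => ?_
  rw [hsq, ← hsq x, hf]
  simp only
  rw [Real.sq_sqrt (by positivity)]

/-- For `q > 0`, the mass of the set `S` under the Gaussian measure `N(0, (ζ² / q) I)` on `ℝ^m`,
written as the integral of its density, which makes it visibly measurable in `q`. -/
noncomputable def mixMass {m : ℕ} (ζ : ℝ) (S : Set (Fin m → ℝ)) (q : ℝ) : ENNReal :=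
  ∫⁻ w in S, ENNReal.ofReal
    (((√(2 * Real.pi) * ζ)⁻¹ * √q) ^ m * Real.exp (-(q * (∑ i, w i ^ 2) / (2 * ζ ^ 2))))

lemma measurable_mixMass {m : ℕ} (ζ : ℝ) (S : Set (Fin m → ℝ)) : Measurable (mixMass ζ S) := by
  unfold mixMass
  refine Measurable.lintegral_prod_right' (ν := volume.restrict S) (f := fun p : ℝ × (Fin m → ℝ) =>
    ENNReal.ofReal (((√(2 * Real.pi) * ζ)⁻¹ * √p.1) ^ m *
      Real.exp (-(p.1 * (∑ i, p.2 i ^ 2) / (2 * ζ ^ 2))))) ?_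
  fun_prop

/-- Conditional law of `w`: given `y` with `‖y‖² = ζ² / q`, the vector `C y` is
`N(0, (ζ² / q) I)`. -/
lemma gaussMat_mulVec_apply {m d : ℕ} {ζ q : ℝ} (hζ : 0 < ζ) (hq : 0 < q) (y : Fin d → ℝ)
    (hy : ∑ i, y i ^ 2 = ζ ^ 2 / q) {S : Set (Fin m → ℝ)} (hS : MeasurableSet S) :
    gaussMat (Fin m) (Fin d) ((fun C i => C i ⬝ᵥ y) ⁻¹' S) = mixMass ζ S q := by
  have hmeas : Measurable fun (C : Fin m → Fin d → ℝ) i => C i ⬝ᵥ y := by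
    unfold dotProduct; fun_prop
  have hpos : 0 < ζ ^ 2 / q := by positivity
  rw [← Measure.map_apply hmeas hS, gaussMat_map_mulVec, hy,
    pi_gaussian_eq (Real.toNNReal_pos.mpr hpos).ne', withDensity_apply _ hS, mixMass]
  refine lintegral_congr fun w => ?_
  rw [Real.coe_toNNReal _ hpos.le, Fintype.card_fin, Real.sqrt_mul (by positivity),
    Real.sqrt_div (by positivity), Real.sqrt_sq hζ.le]
  congr 3
  · have := Real.sqrt_pos.mpr hq
    field_simp
  · field_simp

/-- The mixture of `N(0, (ζ² / ‖ξ‖²) I)` over a standard Gaussian `ξ` in `ℝ^n` is the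
multivariate `t`-distribution. -/
lemma lintegral_mixMass {m n : ℕ} (hn : 0 < n) {ζ : ℝ} (hζ : 0 < ζ) {S : Set (Fin m → ℝ)}
    (hS : MeasurableSet S) :
    ∫⁻ ξ, mixMass ζ S (∑ i, ξ i ^ 2) ∂(gaussVec (Fin n)) =
      (volume : Measure (Fin m → ℝ)).withDensity (fun wbar =>
        ENNReal.ofReal
          ((1 / (Real.sqrt Real.pi * ζ) ^ m) *
            (Real.Gamma (((m : ℝ) + n) / 2) / Real.Gamma ((n : ℝ) / 2)) *
            (1 + euclNorm wbar ^ 2 / ζ ^ 2) ^ (-(((m : ℝ) + n) / 2)))) S := by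
  unfold gaussVec
  rw [pi_gaussian_eq one_ne_zero, lintegral_withDensity_eq_lintegral_mul _ (by fun_prop)
    (show Measurable fun ξ : Fin n → ℝ => mixMass ζ S (∑ i, ξ i ^ 2) from
      (measurable_mixMass ζ S).comp (by fun_prop)), withDensity_apply _ hS]
  simp only [Pi.mul_apply, mixMass]
  simp_rw [← lintegral_const_mul' _ _ ENNReal.ofReal_ne_top]
  rw [lintegral_lintegral_swap (by unfold Function.uncurry; fun_prop)]
  refine lintegral_congr fun w => ?_
  set s := ∑ i, w i ^ 2 with hs
  have hs0 : 0 ≤ s := by positivity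
  -- The Gaussian exponents combine to `-b ‖ξ‖²`.
  set b : ℝ := (1 + s / ζ ^ 2) / 2 with hb
  have hb0 : 0 < b := by positivity
  have h1 : ∀ ξ : Fin n → ℝ, ENNReal.ofReal ((√(2 * Real.pi * ((1 : NNReal) : ℝ)))⁻¹ ^
        Fintype.card (Fin n) * Real.exp (-(∑ i, ξ i ^ 2) / (2 * ((1 : NNReal) : ℝ)))) *
      ENNReal.ofReal (((√(2 * Real.pi) * ζ)⁻¹ * √(∑ i, ξ i ^ 2)) ^ m *
        Real.exp (-((∑ i, ξ i ^ 2) * s / (2 * ζ ^ 2)))) =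
      ENNReal.ofReal ((√(2 * Real.pi))⁻¹ ^ n * ((√(2 * Real.pi) * ζ)⁻¹) ^ m) *
      ENNReal.ofReal (√(∑ i, ξ i ^ 2) ^ m * Real.exp (-b * ∑ i, ξ i ^ 2)) := by
    intro ξ
    have he : Real.exp (-b * ∑ i, ξ i ^ 2) = Real.exp (-(∑ i, ξ i ^ 2) / 2) *
        Real.exp (-((∑ i, ξ i ^ 2) * s / (2 * ζ ^ 2))) := by
      rw [← Real.exp_add, hb]
      congr 1
      field_simp
      ring
    rw [← ENNReal.ofReal_mul (by positivity), ← ENNReal.ofReal_mul (by positivity), he]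
    simp only [NNReal.coe_one, mul_one, Fintype.card_fin, mul_pow]
    congr 1
    ring
  simp_rw [h1]
  rw [lintegral_const_mul' _ _ ENNReal.ofReal_ne_top, integral_radial hn m hb0,
    ← ENNReal.ofReal_mul (by positivity), euclNorm_sq, ← hs]
  congr 1
  have hx : 0 < 1 + s / ζ ^ 2 := by positivity
  have h2 : b ^ (-(((m : ℝ) + n) / 2)) = √2 ^ (m + n) * (1 + s / ζ ^ 2) ^ (-(((m : ℝ) + n) / 2)) := by
    rw [hb, Real.div_rpow hx.le (by norm_num), div_eq_mul_inv, mul_comm]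
    congr 1
    rw [Real.rpow_neg (by norm_num), inv_inv, Real.sqrt_eq_rpow, ← Real.rpow_natCast,
      ← Real.rpow_mul (by norm_num)]
    congr 1
    push_cast; ring
  rw [h2, Real.sqrt_mul (by norm_num)]
  have h2p : 0 < √(2 : ℝ) := by positivity
  have hpp : 0 < √Real.pi := Real.sqrt_pos.mpr Real.pi_pos
  have hGn : 0 < Real.Gamma ((n : ℝ) / 2) := Real.Gamma_pos_of_pos (by positivity)
  generalize (1 + s / ζ ^ 2) ^ (-(((m : ℝ) + n) / 2)) = R
  generalize Real.Gamma (((m : ℝ) + n) / 2) = G1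
  generalize Real.Gamma ((n : ℝ) / 2) = G2 at hGn ⊢
  rw [pow_add]
  simp only [mul_pow, mul_inv, inv_pow]
  field_simp

/-! ### Generic linear independence of Gaussian rows -/

/-- Adjoining an independent standard Gaussian row to a Gaussian matrix. -/
lemma map_gaussMat_cons (k d : ℕ) :
    ((gaussMat (Fin k) (Fin d)).prod (gaussVec (Fin d))).map
      (fun p => (Fin.cons p.2 p.1 : Fin (k + 1) → Fin d → ℝ)) = gaussMat (Fin (k + 1)) (Fin d) := by
  have h1 := (measurePreserving_piFinSuccAbove
    (fun _ : Fin (k + 1) => gaussVec (Fin d)) 0).symm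
  have h2 := h1.comp (Measure.measurePreserving_swap
    (μ := gaussMat (Fin k) (Fin d)) (ν := gaussVec (Fin d)))
  have h3 : (fun p : (Fin k → Fin d → ℝ) × (Fin d → ℝ) =>
      (Fin.cons p.2 p.1 : Fin (k + 1) → Fin d → ℝ)) =
      (MeasurableEquiv.piFinSuccAbove (fun _ : Fin (k + 1) => Fin d → ℝ) 0).symm ∘ Prod.swap := by
    ext p i j
    simp [MeasurableEquiv.piFinSuccAbove, Fin.insertNthEquiv]
  rw [h3]
  exact h2.map_eq

lemma measurable_cons_s4 (k d : ℕ) : Measurable (fun p : (Fin k → Fin d → ℝ) × (Fin d → ℝ) =>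
    (Fin.cons p.2 p.1 : Fin (k + 1) → Fin d → ℝ)) := by
  refine measurable_pi_lambda _ fun i => ?_
  refine Fin.cases ?_ (fun j => ?_) i
  · simpa using measurable_snd
  · simpa using! (measurable_pi_apply j).comp measurable_fst

lemma ae_mulVec_ne_zero {r d : ℕ} (hr : 0 < r) (F : Matrix (Fin r) (Fin d) ℝ)
    (hF : F * Fᵀ = 1) : ∀ᵐ b ∂(gaussVec (Fin d)), F *ᵥ b ≠ 0 := by
  have h : ∀ᵐ ξ ∂(gaussVec (Fin r)), ξ ≠ 0 := by
    rw [ae_iff]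
    simp only [ne_eq, not_not, Set.ofPred_eq_eq_singleton]
    unfold gaussVec
    rw [Measure.pi_singleton]
    have := nullSingletonClass_gaussianReal (μ := 0) (v := 1) one_ne_zero
    exact Finset.prod_eq_zero (Finset.mem_univ ⟨0, hr⟩) (measure_singleton _)
  rw [← gaussVec_map_mulVec F hF] at h
  have hm : Measurable fun b : Fin d → ℝ => F *ᵥ b := by unfold mulVec dotProduct; fun_prop
  exact ae_of_ae_map (p := fun ξ => ξ ≠ 0) hm.aemeasurable h

/-- By induction on the number of rows: a new Gaussian row almost surely leaves the span of the
previous ones, since its projection onto their complement is a nondegenerate Gaussian vector. -/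
lemma ae_linearIndependent_s4 (d : ℕ) : ∀ k ≤ d, ∀ᵐ B ∂(gaussMat (Fin k) (Fin d)),
    LinearIndependent ℝ (fun i => B i) := by
  intro k
  induction k with
  | zero => intro _; exact Filter.Eventually.of_forall fun B => linearIndependent_empty_type
  | succ k ih =>
    intro hk
    have hmeas : MeasurableSet {B : Fin (k + 1) → Fin d → ℝ | LinearIndependent ℝ B} :=
      isOpen_setOfPred_linearIndependent.measurableSet
    rw [← map_gaussMat_cons, ae_map_iff (measurable_cons_s4 k d).aemeasurable hmeas]
    refine (Measure.ae_prod_iff_ae_ae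
      (p := fun x => LinearIndependent ℝ (Fin.cons x.2 x.1 : Fin (k + 1) → Fin d → ℝ))
      (measurable_cons_s4 k d hmeas)).mpr ?_
    filter_upwards [ih (by omega)] with B hB
    obtain ⟨F, hF, hFB, -⟩ := exists_complement (Matrix.of B) hB
    filter_upwards [ae_mulVec_ne_zero (by omega) F hF] with b hb
    refine linearIndependent_finCons.mpr ⟨hB, fun hmem => hb ?_⟩
    obtain ⟨c, rfl⟩ := (mem_span_rows_iff (Matrix.of B) b).mp hmem
    rw [← Matrix.mulVec_transpose, Matrix.mulVec_mulVec, hFB, Matrix.zero_mulVec]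

/-! ### The law of `C y` -/

lemma measurable_minNorm {ι κ : Type*} [Fintype ι] [DecidableEq ι] [Fintype κ] (z : ι → ℝ) :
    Measurable fun M : ι → κ → ℝ => minNorm (Matrix.of M) z := by
  have hof : Continuous fun M : ι → κ → ℝ => Matrix.of M := continuous_id
  have hg : Continuous fun M : ι → κ → ℝ => Matrix.of M * (Matrix.of M)ᵀ :=
    hof.matrix_mul hof.matrix_transpose
  have hinv : ∀ i j, Measurable fun M : ι → κ → ℝ => (Matrix.of M * (Matrix.of M)ᵀ)⁻¹ i j := by
    intro i j
    have : (fun M : ι → κ → ℝ => (Matrix.of M * (Matrix.of M)ᵀ)⁻¹ i j) = fun M =>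
        ((Matrix.of M * (Matrix.of M)ᵀ).det)⁻¹ * (Matrix.of M * (Matrix.of M)ᵀ).adjugate i j := by
      ext M
      rw [Matrix.inv_def, Ring.inverse_eq_inv']
      rfl
    rw [this]
    exact hg.matrix_det.measurable.inv.mul (hg.matrix_adjugate.matrix_elem i j).measurable
  refine measurable_pi_lambda _ fun j => ?_
  change Measurable fun M : ι → κ → ℝ =>
    ∑ i, M i j * ∑ l, (Matrix.of M * (Matrix.of M)ᵀ)⁻¹ i l * z l
  refine Finset.measurable_sum _ fun i _ => ?_
  have hA : Measurable fun M : ι → κ → ℝ => M i j := by fun_prop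
  have hc : Measurable fun M : ι → κ → ℝ =>
      ∑ l, (Matrix.of M * (Matrix.of M)ᵀ)⁻¹ i l * z l :=
    Finset.measurable_sum _ fun l _ => (hinv i l).mul_const _
  exact hA.mul hc

lemma measurable_joint {k d m : ℕ} (z : Fin (k + 1) → ℝ) :
    Measurable fun p : (Fin (k + 1) → Fin d → ℝ) × (Fin m → Fin d → ℝ) =>
      fun i => p.2 i ⬝ᵥ minNorm (Matrix.of p.1) z := by
  have hy := measurable_minNorm (κ := Fin d) z
  refine measurable_pi_lambda _ fun i => Finset.measurable_sum _ fun j _ => ?_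
  have h1 : Measurable fun p : (Fin (k + 1) → Fin d → ℝ) × (Fin m → Fin d → ℝ) => p.2 i j := by
    fun_prop
  exact h1.mul ((measurable_pi_apply j).comp (hy.comp measurable_fst))

/-- Only the first row of `M` is used to produce `ξ`: for almost all values of the other rows, the
conditional integral is the right-hand side, which does not depend on them. -/
lemma lintegral_minNorm {k d m : ℕ} (hk : k + 1 ≤ d) {ζ : ℝ} (hζ : 0 < ζ)
    {S : Set (Fin m → ℝ)} (hS : MeasurableSet S) :
    ∫⁻ M, gaussMat (Fin m) (Fin d)
        ((fun C i => C i ⬝ᵥ minNorm (Matrix.of M) (Pi.single 0 ζ)) ⁻¹' S)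
        ∂(gaussMat (Fin (k + 1)) (Fin d)) =
      ∫⁻ ξ, mixMass ζ S (∑ i, ξ i ^ 2) ∂(gaussVec (Fin (d - k))) := by
  have hm1 : Measurable fun M : Fin (k + 1) → Fin d → ℝ => gaussMat (Fin m) (Fin d)
      ((fun C i => C i ⬝ᵥ minNorm (Matrix.of M) (Pi.single 0 ζ)) ⁻¹' S) :=
    measurable_measure_prodMk_left (measurable_joint _ hS)
  rw [← map_gaussMat_cons, lintegral_map hm1 (measurable_cons_s4 k d),
    lintegral_prod (f := fun p => gaussMat (Fin m) (Fin d)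
      ((fun C i => C i ⬝ᵥ minNorm (Matrix.of (Fin.cons p.2 p.1 : Fin (k + 1) → Fin d → ℝ))
        (Pi.single 0 ζ)) ⁻¹' S) ) (hm1.comp (measurable_cons_s4 k d)).aemeasurable]
  have hin : ∀ᵐ B ∂(gaussMat (Fin k) (Fin d)), (∫⁻ b, gaussMat (Fin m) (Fin d)
      ((fun C i => C i ⬝ᵥ minNorm (Matrix.of (Fin.cons b B : Fin (k + 1) → Fin d → ℝ))
        (Pi.single 0 ζ)) ⁻¹' S) ∂(gaussVec (Fin d))) =
      ∫⁻ ξ, mixMass ζ S (∑ i, ξ i ^ 2) ∂(gaussVec (Fin (d - k))) := by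
    filter_upwards [ae_linearIndependent_s4 d k (by omega)] with B hB
    obtain ⟨F, hF, hFB, hx⟩ := exists_complement (Matrix.of B) hB
    have hmF : Measurable fun b : Fin d → ℝ => F *ᵥ b := by unfold mulVec dotProduct; fun_prop
    rw [← gaussVec_map_mulVec F hF, lintegral_map
      (show Measurable fun ξ : Fin (d - k) → ℝ => mixMass ζ S (∑ i, ξ i ^ 2) from
        (measurable_mixMass ζ S).comp (by fun_prop)) hmF]
    refine lintegral_congr_ae ?_
    filter_upwards [ae_mulVec_ne_zero (by omega) F hF] with b hb
    have hq : 0 < ∑ i, (F *ᵥ b) i ^ 2 := by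
      have h := euclNorm_pos hb
      rw [← euclNorm_sq]
      positivity
    exact gaussMat_mulVec_apply hζ hq _
      (sum_sq_minNorm (Matrix.of B) hB F hF hFB hx b hb ζ _ rfl) hS
  rw [lintegral_congr_ae hin]
  simp

/-- Independence: two blocks of jointly orthonormal rows, applied to one Gaussian matrix, give
independent Gaussian matrices. -/
lemma gaussMat_map_blocks {D d a b : ℕ} (M : Matrix (Fin a) (Fin D) ℝ) (N : Matrix (Fin b) (Fin D) ℝ)
    (hM : M * Mᵀ = 1) (hN : N * Nᵀ = 1) (hMN : M * Nᵀ = 0) :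
    (gaussMat (Fin D) (Fin d)).map (fun A =>
        ((fun i j => ∑ l, M i l * A l j : Fin a → Fin d → ℝ),
          (fun i j => ∑ l, N i l * A l j : Fin b → Fin d → ℝ))) =
      (gaussMat (Fin a) (Fin d)).prod (gaussMat (Fin b) (Fin d)) := by
  have hNM : N * Mᵀ = 0 := by
    rw [← Matrix.transpose_eq_zero, Matrix.transpose_mul, Matrix.transpose_transpose, hMN]
  -- The stacked matrix has orthonormal rows.
  have hW : Matrix.fromRows M N * (Matrix.fromRows M N)ᵀ = 1 := by
    rw [Matrix.transpose_fromRows, Matrix.fromRows_mul_fromCols, hM, hN, hMN, hNM,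
      Matrix.fromBlocks_one]
  have h1 := gaussMat_map_mul (κ := Fin d) (Matrix.fromRows M N) hW
  have h2 := measurePreserving_sumPiEquivProdPi
    (fun _ : Fin a ⊕ Fin b => gaussVec (Fin d))
  have h3 := h2.map_eq
  change Measure.map _ (gaussMat (Fin a ⊕ Fin b) (Fin d)) = _ at h3
  rw [← h1, Measure.map_map (MeasurableEquiv.measurable _) (by fun_prop)] at h3
  exact h3

/-- The random vector `w(A) = Vᵀ A y₂*(A)` follows the `(D−d_e)`-dimensional
multivariate `t`-distribution with `n = d − d_e + 1` degrees of freedom and scale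
`(‖z*‖²/n)·I`, i.e. the law of `w` has the stated density with respect to Lebesgue measure. -/
theorem stmt4 (D d d_e : ℕ) (h1 : 1 ≤ d_e) (h2 : d_e ≤ d) (h3 : d_e < D)
    (U : Matrix (Fin D) (Fin d_e) ℝ) (V : Matrix (Fin D) (Fin (D - d_e)) ℝ)
    (hU : Uᵀ * U = 1) (hV : Vᵀ * V = 1) (hUV : Uᵀ * V = 0)
    (p xstar : Fin D → ℝ)
    (zstar : Fin d_e → ℝ) (hz : zstar = Uᵀ.mulVec (xstar - p)) (hz0 : zstar ≠ 0)
    (m n : ℕ) (hm : m = D - d_e) (hn : n = d - d_e + 1) :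
    (gaussMatrix D d).map (fun A : Fin D → Fin d → ℝ =>
        Vᵀ.mulVec ((Matrix.of A).mulVec
          ((Uᵀ * Matrix.of A)ᵀ.mulVec
            (((Uᵀ * Matrix.of A) * (Uᵀ * Matrix.of A)ᵀ)⁻¹.mulVec zstar)))) =
      (volume : Measure (Fin (D - d_e) → ℝ)).withDensity (fun wbar =>
        ENNReal.ofReal
          ((1 / (Real.sqrt Real.pi * euclNorm zstar) ^ m) *
            (Real.Gamma (((m : ℝ) + n) / 2) / Real.Gamma ((n : ℝ) / 2)) *
            (1 + euclNorm wbar ^ 2 / euclNorm zstar ^ 2) ^ (-(((m : ℝ) + n) / 2)))) := by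
  obtain ⟨k, rfl⟩ : ∃ k, d_e = k + 1 := ⟨d_e - 1, by omega⟩
  subst hm
  obtain rfl : n = d - k := by omega
  have hζ := euclNorm_pos hz0
  obtain ⟨Q, hQ, hQz⟩ := exists_rotation zstar hz0
  have hblocks := gaussMat_map_blocks (d := d) (Q * Uᵀ) Vᵀ
    (by rw [Matrix.transpose_mul, Matrix.transpose_transpose, Matrix.mul_assoc,
      ← Matrix.mul_assoc Uᵀ, hU, Matrix.one_mul, hQ])
    (by rw [Matrix.transpose_transpose, hV])
    (by rw [Matrix.transpose_transpose, Matrix.mul_assoc, hUV, Matrix.mul_zero])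
  have hw : (fun A : Fin D → Fin d → ℝ =>
        Vᵀ.mulVec ((Matrix.of A).mulVec
          ((Uᵀ * Matrix.of A)ᵀ.mulVec
            (((Uᵀ * Matrix.of A) * (Uᵀ * Matrix.of A)ᵀ)⁻¹.mulVec zstar)))) =
      (fun p : (Fin (k + 1) → Fin d → ℝ) × (Fin (D - (k + 1)) → Fin d → ℝ) =>
        fun i => p.2 i ⬝ᵥ minNorm (Matrix.of p.1) (Pi.single 0 (euclNorm zstar))) ∘
      (fun A => ((fun i j => ∑ l, (Q * Uᵀ) i l * A l j : Fin (k + 1) → Fin d → ℝ),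
        (fun i j => ∑ l, Vᵀ i l * A l j : Fin (D - (k + 1)) → Fin d → ℝ))) := by
    ext A i
    have h4 : minNorm (Q * Uᵀ * Matrix.of A) (Pi.single 0 (euclNorm zstar)) =
        minNorm (Uᵀ * Matrix.of A) zstar := by
      rw [← hQz, Matrix.mul_assoc, minNorm_rotate Q hQ]
    change _ = ((Vᵀ * Matrix.of A) *ᵥ
      minNorm (Q * Uᵀ * Matrix.of A) (Pi.single 0 (euclNorm zstar))) i
    rw [h4, ← Matrix.mulVec_mulVec]
    rfl
  have hbm : Measurable (fun A : Fin D → Fin d → ℝ =>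
      ((fun i j => ∑ l, (Q * Uᵀ) i l * A l j : Fin (k + 1) → Fin d → ℝ),
        (fun i j => ∑ l, Vᵀ i l * A l j : Fin (D - (k + 1)) → Fin d → ℝ))) := by
    fun_prop
  rw [hw, ← Measure.map_map (measurable_joint _) hbm]
  change Measure.map _ (Measure.map _ (gaussMat (Fin D) (Fin d))) = _
  rw [hblocks]
  ext S hS
  rw [Measure.map_apply (measurable_joint _) hS, Measure.prod_apply (measurable_joint _ hS),
    ← lintegral_mixMass (by omega) hζ hS, ← lintegral_minNorm h2 hζ hS]
  rfl
end

section
/- Let D, d, d_e be natural numbers with 1 ≤ d_e, d_e ≤ d and d_e < D, let U be a D×d_e real matrix and V a D×(D−d_e) real matrix with UᵀU = I, VᵀV = I, UᵀV = 0 and U Uᵀ + V Vᵀ = I. Suppose f : ℝ^D → ℝ is continuous and satisfies f(x) = f(U Uᵀ x) for all x, let X = [−1,1]^D, and let x* ∈ X satisfy f(x*) ≤ f(x) for all x ∈ X. Assume non-degeneracy: the Lebesgue measure of the set Ḡ* = { g ∈ ℝ^{D−d_e} : U Uᵀ x* + V g ∈ X } is positive. Let μ be the Gaussian matrix measure on D×d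 real matrices. Then for every p ∈ X, μ{ A : ∃ y ∈ ℝ^d, A y + p ∈ X and f(A y + p) = f(x*) } > 0 (the set being evaluated by the outer measure of μ if it is not measurable). -/
/-!
Write `u = Uᵀ (xstar - p)`. A point `x` satisfies `f x = f xstar` as soon as `Uᵀ x = Uᵀ xstar`.
If `u = 0`, then `y = 0` succeeds for every `A`, so the event is the whole space.

If `u ≠ 0`, the event is a neighbourhood of a suitable matrix, and the Gaussian measure charges
nonempty open sets. The set of admissible `g` is convex with positive volume, so it has an interior
point `g₀`. With `E` the projection of `ℝ^d` onto its first `d_e` coordinates, the matrix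
`A₀ = U E + (u ⬝ᵥ u)⁻¹ • V (Vᵀ w) (Eᵀ u)ᵀ`, where `w = U Uᵀ xstar + V g₀ - p`, satisfies
`Uᵀ A₀ = E` and `A₀ Eᵀ u = w`. For `A` near `A₀` the vector `y(A) = Eᵀ (Uᵀ A Eᵀ)⁻¹ u` is well defined
and continuous in `A`, it solves `Uᵀ A y = u` exactly, and `Vᵀ (A y(A) + p)` stays close to `g₀`,
hence admissible.
-/

open Matrix MeasureTheory ProbabilityTheory

open Topology

/-- The standard Gaussian matrix measure has full support. -/
lemma gaussMatrix_isOpenPos (D d : ℕ) : (gaussMatrix D d).IsOpenPosMeasure := by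
  have : (gaussianReal 0 1).IsOpenPosMeasure :=
    (gaussianReal_absolutelyContinuous' 0 one_ne_zero).isOpenPosMeasure
  have : (Measure.pi fun _ : Fin d => gaussianReal 0 1).IsOpenPosMeasure :=
    Measure.pi.isOpenPosMeasure _
  exact Measure.pi.isOpenPosMeasure _

/-- A convex set of positive volume has nonempty interior, because its frontier is null. -/
lemma Convex.interior_nonempty_of_volume_pos {n : ℕ} {s : Set (Fin n → ℝ)} (hs : Convex ℝ s)
    (h : 0 < volume s) : (interior s).Nonempty := by
  by_contra hne
  rw [Set.not_nonempty_iff_eq_empty] at hne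
  have h0 : volume (frontier s) = 0 := hs.addHaar_frontier volume
  have hsub : s ⊆ frontier s := by
    rw [frontier, hne, Set.sdiff_empty]
    exact subset_closure
  exact h.ne' (measure_mono_null hsub h0)

/-- The matrix of the projection of `ℝ^d` onto its first `m` coordinates has orthonormal rows. -/
lemma exists_mul_transpose_eq_one {m d : ℕ} (h : m ≤ d) :
    ∃ E : Matrix (Fin m) (Fin d) ℝ, E * Eᵀ = 1 := by
  refine ⟨(1 : Matrix (Fin d) (Fin d) ℝ).submatrix (Fin.castLE h) id, ?_⟩
  rw [transpose_submatrix, transpose_one, ← submatrix_mul _ _ _ _ _ Function.bijective_id, one_mul]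
  exact submatrix_one _ (Fin.castLE_injective h)

/-- Under non-degeneracy of the connected component `G*` of global minimizers,
for any `p ∈ X` the reduced problem over the random subspace `p + range(A)` is successful with
positive probability. -/
theorem stmt5 (D d d_e : ℕ) (h1 : 1 ≤ d_e) (h2 : d_e ≤ d) (h3 : d_e < D)
    (U : Matrix (Fin D) (Fin d_e) ℝ) (V : Matrix (Fin D) (Fin (D - d_e)) ℝ)
    (hU : Uᵀ * U = 1) (hV : Vᵀ * V = 1) (hUV : Uᵀ * V = 0)
    (hUV1 : U * Uᵀ + V * Vᵀ = 1)
    (f : (Fin D → ℝ) → ℝ) (hfc : Continuous f)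
    (hf : ∀ x : Fin D → ℝ, f x = f (U.mulVec (Uᵀ.mulVec x)))
    (X : Set (Fin D → ℝ)) (hX : X = Set.Icc (-1 : Fin D → ℝ) 1)
    (xstar : Fin D → ℝ) (hxX : xstar ∈ X) (hmin : ∀ x ∈ X, f xstar ≤ f x)
    (hnondeg :
      0 < volume {g : Fin (D - d_e) → ℝ | U.mulVec (Uᵀ.mulVec xstar) + V.mulVec g ∈ X})
    (p : Fin D → ℝ) (hp : p ∈ X) :
    0 < gaussMatrix D d {A : Fin D → Fin d → ℝ |
      ∃ y : Fin d → ℝ, (Matrix.of A).mulVec y + p ∈ X ∧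
        f ((Matrix.of A).mulVec y + p) = f xstar} := by
  have := gaussMatrix_isOpenPos D d
  -- Agreement of `Uᵀ x` with `Uᵀ xstar` forces `f x = f xstar`.
  have hfx : ∀ x : Fin D → ℝ, Uᵀ *ᵥ x = Uᵀ *ᵥ xstar → f x = f xstar := by
    intro x hx
    rw [hf x, hx, ← hf xstar]
  have hVU : Vᵀ * U = 0 := by
    have := congrArg transpose hUV
    simpa using this
  have hdec : ∀ x : Fin D → ℝ, U *ᵥ (Uᵀ *ᵥ x) + V *ᵥ (Vᵀ *ᵥ x) = x := by
    intro x
    rw [mulVec_mulVec, mulVec_mulVec, ← add_mulVec, hUV1, one_mulVec]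
  by_cases hu : Uᵀ *ᵥ (xstar - p) = 0
  · have hpx : f p = f xstar := by
      apply hfx
      rw [mulVec_sub, sub_eq_zero] at hu
      exact hu.symm
    refine Measure.measure_pos_of_mem_nhds (x := 0) _ (Filter.Eventually.of_forall fun A => ?_)
    exact ⟨0, by simpa using hp, by simpa using hpx⟩
  set u := Uᵀ *ᵥ (xstar - p) with hu_def
  obtain ⟨E, hE⟩ := exists_mul_transpose_eq_one h2
  have hconv : Convex ℝ {g : Fin (D - d_e) → ℝ | U *ᵥ (Uᵀ *ᵥ xstar) + V *ᵥ g ∈ X} := by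
    have hXc : Convex ℝ X := hX ▸ convex_Icc _ _
    exact (hXc.translate_preimage_right (U *ᵥ (Uᵀ *ᵥ xstar))).linear_preimage V.mulVecLin
  obtain ⟨g₀, hg₀⟩ := hconv.interior_nonempty_of_volume_pos hnondeg
  set w := U *ᵥ (Uᵀ *ᵥ xstar) + V *ᵥ g₀ - p with hw
  have hUw : Uᵀ *ᵥ w = u := by
    simp only [hw, hu_def, mulVec_sub, mulVec_add, mulVec_mulVec, ← Matrix.mul_assoc, hU, hUV,
      Matrix.one_mul, zero_mulVec, add_zero]
  have huu : u ⬝ᵥ u ≠ 0 := fun h => hu (dotProduct_self_eq_zero.1 h)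
  -- The rank-one term sends `Eᵀ u` to the `V`-component of `w` and is invisible to `Uᵀ`.
  set A₀ : Matrix (Fin D) (Fin d) ℝ :=
    U * E + V * vecMulVec (Vᵀ *ᵥ w) ((u ⬝ᵥ u)⁻¹ • (Eᵀ *ᵥ u)) with hA₀
  have hB₀ : Uᵀ * A₀ = E := by
    rw [hA₀, Matrix.mul_add, ← Matrix.mul_assoc, ← Matrix.mul_assoc, hU, hUV]
    simp
  have hEu : E *ᵥ (Eᵀ *ᵥ u) = u := by rw [mulVec_mulVec, hE, one_mulVec]
  have hA₀y : A₀ *ᵥ (Eᵀ *ᵥ u) = w := by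
    have hdot : ((u ⬝ᵥ u)⁻¹ • (Eᵀ *ᵥ u)) ⬝ᵥ (Eᵀ *ᵥ u) = 1 := by
      rw [smul_dotProduct, mulVec_transpose E u, ← dotProduct_mulVec, ← mulVec_transpose, hEu,
        smul_eq_mul, inv_mul_cancel₀ huu]
    rw [hA₀, add_mulVec, ← mulVec_mulVec, hEu, ← mulVec_mulVec, vecMulVec_mulVec, hdot]
    simpa [hUw] using hdec w
  let M : Matrix (Fin D) (Fin d) ℝ → Matrix (Fin d_e) (Fin d_e) ℝ := fun A => Uᵀ * A * Eᵀ
  let y : Matrix (Fin D) (Fin d) ℝ → Fin d → ℝ := fun A => Eᵀ *ᵥ ((M A)⁻¹ *ᵥ u)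
  have hM : Continuous M := by fun_prop
  have hM₀ : M A₀ = 1 := by simp only [M, hB₀, hE]
  have hy₀ : y A₀ = Eᵀ *ᵥ u := by simp only [y, hM₀, inv_one, one_mulVec]
  have hMinv : ContinuousAt (fun A => (M A)⁻¹) A₀ := by
    refine ContinuousAt.comp (g := Inv.inv) (continuousAt_matrix_inv _ ?_) hM.continuousAt
    rw [hM₀, det_one, Ring.inverse_eq_inv']
    exact continuousAt_inv₀ one_ne_zero
  have hy : ContinuousAt y A₀ := by
    have hc : Continuous fun N : Matrix (Fin d_e) (Fin d_e) ℝ => Eᵀ *ᵥ (N *ᵥ u) := by fun_prop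
    exact hc.continuousAt.comp hMinv
  have hG : ContinuousAt (fun A => Vᵀ *ᵥ (A *ᵥ y A + p)) A₀ := by
    have hc : Continuous fun q : Matrix (Fin D) (Fin d) ℝ × (Fin d → ℝ) =>
        Vᵀ *ᵥ (q.1 *ᵥ q.2 + p) := by fun_prop
    have hp : ContinuousAt (fun A : Matrix (Fin D) (Fin d) ℝ => (A, y A)) A₀ :=
      continuousAt_id.prodMk hy
    exact ContinuousAt.comp (f := fun A : Matrix (Fin D) (Fin d) ℝ => (A, y A)) (x := A₀)
      (hc.continuousAt (x := (A₀, y A₀))) hp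
  have hG₀ : Vᵀ *ᵥ (A₀ *ᵥ y A₀ + p) = g₀ := by
    rw [hy₀, hA₀y, hw, sub_add_cancel, mulVec_add, mulVec_mulVec _ Vᵀ U, hVU,
      mulVec_mulVec _ Vᵀ V, hV]
    simp
  have hdet : ∀ᶠ A in 𝓝 A₀, IsUnit (M A).det := by
    have hc : ContinuousAt (fun A => (M A).det) A₀ := hM.matrix_det.continuousAt
    have hne : (M A₀).det ≠ 0 := by rw [hM₀, det_one]; exact one_ne_zero
    filter_upwards [hc.eventually_ne hne] with A hA using isUnit_iff_ne_zero.2 hA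
  have hmem : ∀ᶠ A in 𝓝 A₀, Vᵀ *ᵥ (A *ᵥ y A + p) ∈
      {g : Fin (D - d_e) → ℝ | U *ᵥ (Uᵀ *ᵥ xstar) + V *ᵥ g ∈ X} :=
    hG.eventually_mem (by rw [hG₀]; exact mem_interior_iff_mem_nhds.1 hg₀)
  have hsucc : ∀ᶠ A in 𝓝 A₀, ∃ z : Fin d → ℝ, A *ᵥ z + p ∈ X ∧ f (A *ᵥ z + p) = f xstar := by
    filter_upwards [hdet, hmem] with A hA hAX
    have hUx : Uᵀ *ᵥ (A *ᵥ y A + p) = Uᵀ *ᵥ xstar := by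
      have h : Uᵀ *ᵥ (A *ᵥ y A) = u := by
        have hMM : M A *ᵥ ((M A)⁻¹ *ᵥ u) = u := by
          rw [mulVec_mulVec, mul_nonsing_inv _ hA, one_mulVec]
        rw [← hMM]
        simp only [y, M, mulVec_mulVec, Matrix.mul_assoc]
      rw [mulVec_add, h, hu_def, mulVec_sub, sub_add_cancel]
    have hx : U *ᵥ (Uᵀ *ᵥ xstar) + V *ᵥ (Vᵀ *ᵥ (A *ᵥ y A + p)) ∈ X := hAX
    rw [← hUx, hdec] at hx
    exact ⟨y A, hx, hfx _ hUx⟩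
  -- `Matrix` is unfolded here: the measure lives on the function type, with the same topology.
  let a₀ : Fin D → Fin d → ℝ := A₀
  have hnhds : {A : Fin D → Fin d → ℝ | ∃ z : Fin d → ℝ, (Matrix.of A).mulVec z + p ∈ X ∧
      f ((Matrix.of A).mulVec z + p) = f xstar} ∈ 𝓝 a₀ := hsucc
  exact Measure.measure_pos_of_mem_nhds _ hnhds
end

section
/- Let D, d, d_e be natural numbers with 1 ≤ d_e, d_e ≤ d and d_e < D, and let U be the D×d_e matrix whose columns are the first d_e standard basis vectors of ℝ^D and V the D×(D−d_e) matrix whose columns are the last D−d_e standard basis vectors (so U = [I_{d_e}; 0]ᵀ, V = [0; I_{D−d_e}]ᵀ). Suppose f : ℝ^D → ℝ satisfies f(x) = f(U Uᵀ x) for all x, let X = [−1,1]^D, let x* ∈ X satisfy f(x*) ≤ f(x) for all x ∈ X, and let p ∈ X be such that z* := Uᵀ(x* − p) = (x* − p)_{1:d_e} ≠ 0. Let μ be the Gaussian matrix measure on D×d real matrices and, for a matrix A, set B = Uᵀ A, y₂*(A) = Bᵀ(B Bᵀ)⁻¹ z*, and w(A) = Vᵀ(A y₂*(A)) ∈ ℝ^{D−d_e}.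 Then μ{ A : ∃ y ∈ ℝ^d, A y + p ∈ X and f(A y + p) = f(x*) } ≥ μ{ A : for every i with 1 ≤ i ≤ D−d_e, −1 − p_{d_e+i} ≤ w(A)_i ≤ 1 − p_{d_e+i} }. -/
/-!
Put `y = Bᵀ (B Bᵀ)⁻¹ z⋆`. Whenever `B Bᵀ` is invertible, `B y = z⋆`, so the point `A y + p` agrees with
`x⋆` in the first `d_e` coordinates; hence `f (A y + p) = f x⋆`, and these coordinates lie in `[-1, 1]`.
The other coordinates of `A y + p` are those of `w A + p`, so they lie in `[-1, 1]` exactly when `w A`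
lies in the box. Thus the event on the left is contained in the event on the right up to the set of
`A` for which `B Bᵀ` is singular.

That set is null. If the leading `d_e × d_e` block `C` of `A` is invertible, the rows of `B` are
linearly independent and `B Bᵀ` is invertible (`isUnit_mul_transpose_of_block`). The Gaussian matrix
measure is absolutely continuous with respect to Lebesgue measure (`gaussMatrix_absolutelyContinuous`),
and Lebesgue-almost every `A` has `det C ≠ 0` (`ae_det_block_ne_zero`): on each line in the direction
of the matrix with leading block `1`, the function `det C` is, up to sign, the evaluation of the
characteristic polynomial of a fixed block, which has finitely many roots.
-/

open Matrix MeasureTheory ProbabilityTheory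

theorem pi_absolutelyContinuous {α : Type*} [MeasurableSpace α] (μ ν : Measure α) [SigmaFinite μ]
    [SigmaFinite ν] (h : μ ≪ ν) (n : ℕ) :
    Measure.pi (fun _ : Fin n => μ) ≪ Measure.pi (fun _ : Fin n => ν) := by
  induction n with
  | zero =>
    rw [Measure.pi_of_empty, Measure.pi_of_empty]
  | succ n ih =>
    rw [← (measurePreserving_piFinSuccAbove (fun _ : Fin (n + 1) => μ) 0).symm.map_eq,
      ← (measurePreserving_piFinSuccAbove (fun _ : Fin (n + 1) => ν) 0).symm.map_eq]
    exact (h.prod ih).map (MeasurableEquiv.measurable _)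

theorem gaussMatrix_absolutelyContinuous (D d : ℕ) :
    gaussMatrix D d ≪ (volume : Measure (Fin D → Fin d → ℝ)) :=
  pi_absolutelyContinuous _ _
    (pi_absolutelyContinuous _ _ (gaussianReal_absolutelyContinuous 0 one_ne_zero) d) D

/-- The leading `k × k` block of a `D × d` matrix. -/
def leadingBlock {D d k : ℕ} (hD : k ≤ D) (hd : k ≤ d) (A : Fin D → Fin d → ℝ) :
    Matrix (Fin k) (Fin k) ℝ :=
  Matrix.of fun i j => A (Fin.castLE hD i) (Fin.castLE hd j)

theorem ae_det_block_ne_zero {D d k : ℕ} (hD : k ≤ D) (hd : k ≤ d) :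
    ∀ᵐ A : Fin D → Fin d → ℝ, (leadingBlock hD hd A).det ≠ 0 := by
  -- the rectangular identity matrix, whose leading block is `1`
  let E : Fin D → Fin d → ℝ := fun i j => if (i : ℕ) = (j : ℕ) then 1 else 0
  have hmeas : MeasurableSet {A : Fin D → Fin d → ℝ | (leadingBlock hD hd A).det ≠ 0} := by
    have hc : Continuous fun A : Fin D → Fin d → ℝ => (leadingBlock hD hd A).det := by
      apply Continuous.matrix_det
      unfold leadingBlock
      fun_prop
    exact (isOpen_ne_fun hc continuous_const).measurableSet
  refine ae_mem_of_ae_add_linearMap_mem (LinearMap.toSpanSingleton ℝ (Fin D → Fin d → ℝ) E)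
    (volume : Measure ℝ) volume hmeas fun A => ?_
  have hfin : {t : ℝ | (-leadingBlock hD hd A).charpoly.eval t = 0}.Finite :=
    Polynomial.finite_setOfPred_isRoot (Matrix.charpoly_monic _).ne_zero
  filter_upwards [compl_mem_ae_iff.2 (hfin.measure_zero volume)] with t ht
  have hblock : leadingBlock hD hd (A + LinearMap.toSpanSingleton ℝ _ E t)
      = Matrix.scalar (Fin k) t - -leadingBlock hD hd A := by
    ext i j
    simp [leadingBlock, E, Matrix.diagonal_apply, Fin.ext_iff]
    ring
  change (leadingBlock hD hd (A + LinearMap.toSpanSingleton ℝ _ E t)).det ≠ 0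
  rw [hblock, ← Matrix.eval_charpoly]
  exact ht

/-- If some `m × m` matrix made of columns of `B` is nonsingular, then `B Bᵀ` is invertible:
a vector in the kernel of `B Bᵀ` annihilates `B` from the left, hence also that submatrix. -/
theorem isUnit_mul_transpose_of_block {m n : ℕ} (B : Matrix (Fin m) (Fin n) ℝ) (e : Fin m → Fin n)
    (h : (B.submatrix id e).det ≠ 0) : IsUnit (B * Bᵀ).det := by
  rw [isUnit_iff_ne_zero]
  intro h0
  obtain ⟨v, hv0, hv⟩ := Matrix.exists_mulVec_eq_zero_iff.2 h0
  have hker : Bᵀ *ᵥ v = 0 := by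
    have := Matrix.ker_mulVecLin_transpose_mul_self Bᵀ
    rw [Matrix.transpose_transpose] at this
    have hmem : v ∈ LinearMap.ker (B * Bᵀ).mulVecLin := hv
    rw [this] at hmem
    exact hmem
  apply h
  rw [← Matrix.det_transpose]
  refine Matrix.exists_mulVec_eq_zero_iff.1 ⟨v, hv0, ?_⟩
  ext j
  exact congrFun hker (e j)

/-- In the coordinate-aligned case, the probability of success of the reduced
problem is at least the probability that `w(A)` lies in the box
`[−1 − p_{d_e+1:D}, 1 − p_{d_e+1:D}]`. -/
theorem stmt6 (D d d_e : ℕ) (h1 : 1 ≤ d_e) (h2 : d_e ≤ d) (h3 : d_e < D)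
    (U : Matrix (Fin D) (Fin d_e) ℝ) (V : Matrix (Fin D) (Fin (D - d_e)) ℝ)
    (hUdef : U = Matrix.of fun (i : Fin D) (j : Fin d_e) =>
      if (i : ℕ) = (j : ℕ) then (1 : ℝ) else 0)
    (hVdef : V = Matrix.of fun (i : Fin D) (j : Fin (D - d_e)) =>
      if (i : ℕ) = d_e + (j : ℕ) then (1 : ℝ) else 0)
    (f : (Fin D → ℝ) → ℝ)
    (hf : ∀ x : Fin D → ℝ, f x = f (U.mulVec (Uᵀ.mulVec x)))
    (X : Set (Fin D → ℝ)) (hX : X = Set.Icc (-1 : Fin D → ℝ) 1)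
    (xstar : Fin D → ℝ) (hxX : xstar ∈ X) (hmin : ∀ x ∈ X, f xstar ≤ f x)
    (p : Fin D → ℝ) (hp : p ∈ X)
    (zstar : Fin d_e → ℝ) (hz : zstar = Uᵀ.mulVec (xstar - p)) (hz0 : zstar ≠ 0)
    (w : (Fin D → Fin d → ℝ) → (Fin (D - d_e) → ℝ))
    (hw : w = fun A => Vᵀ.mulVec ((Matrix.of A).mulVec
      ((Uᵀ * Matrix.of A)ᵀ.mulVec
        (((Uᵀ * Matrix.of A) * (Uᵀ * Matrix.of A)ᵀ)⁻¹.mulVec zstar)))) :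
    gaussMatrix D d {A : Fin D → Fin d → ℝ |
        ∀ i : Fin (D - d_e),
          -1 - p ⟨d_e + (i : ℕ), by omega⟩ ≤ w A i ∧
            w A i ≤ 1 - p ⟨d_e + (i : ℕ), by omega⟩} ≤
      gaussMatrix D d {A : Fin D → Fin d → ℝ |
        ∃ y : Fin d → ℝ, (Matrix.of A).mulVec y + p ∈ X ∧
          f ((Matrix.of A).mulVec y + p) = f xstar} := by
  have hUT : ∀ (x : Fin D → ℝ) (j : Fin d_e), (Uᵀ *ᵥ x) j = x ⟨j, by omega⟩ := by
    intro x j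
    rw [Matrix.mulVec, dotProduct, Finset.sum_eq_single ⟨(j : ℕ), by omega⟩]
    · simp [hUdef]
    · intro b _ hb
      have : (b : ℕ) ≠ j := fun h => hb (Fin.ext h)
      simp [hUdef, this]
    · simp
  have hVT : ∀ (x : Fin D → ℝ) (j : Fin (D - d_e)), (Vᵀ *ᵥ x) j = x ⟨d_e + j, by omega⟩ := by
    intro x j
    rw [Matrix.mulVec, dotProduct, Finset.sum_eq_single ⟨d_e + (j : ℕ), by omega⟩]
    · simp [hVdef]
    · intro b _ hb
      have : (b : ℕ) ≠ d_e + j := fun h => hb (Fin.ext h)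
      simp [hVdef, this]
    · simp
  apply measure_mono_ae
  filter_upwards [(gaussMatrix_absolutelyContinuous D d).ae_le
    (ae_det_block_ne_zero (k := d_e) h3.le h2)] with A hA hbox
  have hsub : (Uᵀ * Matrix.of A).submatrix id (Fin.castLE h2) = leadingBlock h3.le h2 A := by
    ext i j
    exact hUT (fun l => A l (Fin.castLE h2 j)) i
  have hunit := isUnit_mul_transpose_of_block (Uᵀ * Matrix.of A) (Fin.castLE h2) (by rwa [hsub])
  set B := Uᵀ * Matrix.of A with hB
  set y : Fin d → ℝ := Bᵀ *ᵥ ((B * Bᵀ)⁻¹ *ᵥ zstar) with hy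
  have hBy : Uᵀ *ᵥ (Matrix.of A *ᵥ y) = zstar := by
    rw [Matrix.mulVec_mulVec, ← hB, hy, Matrix.mulVec_mulVec, Matrix.mulVec_mulVec,
      Matrix.mul_nonsing_inv _ hunit, Matrix.one_mulVec]
  have hagree : Uᵀ *ᵥ (Matrix.of A *ᵥ y + p) = Uᵀ *ᵥ xstar := by
    rw [Matrix.mulVec_add, hBy, hz, Matrix.mulVec_sub, sub_add_cancel]
  refine ⟨y, ?_, by rw [hf, hagree, ← hf]⟩
  have hcoord : ∀ i, -1 ≤ (Matrix.of A *ᵥ y + p) i ∧ (Matrix.of A *ᵥ y + p) i ≤ 1 := by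
    intro i
    by_cases hi : (i : ℕ) < d_e
    · have h := congrFun hagree ⟨i, hi⟩
      rw [hUT, hUT] at h
      rw [hX] at hxX
      have h' : (Matrix.of A *ᵥ y + p) i = xstar i := h
      rw [h']
      exact ⟨hxX.1 i, hxX.2 i⟩
    · have h := hbox ⟨i - d_e, by omega⟩
      have hwi : w A ⟨i - d_e, by omega⟩ = (Matrix.of A *ᵥ y) i := by
        rw [hw]
        refine (hVT _ _).trans (congrArg _ (Fin.ext ?_))
        simp only
        omega
      have hi' : (⟨d_e + ((⟨i - d_e, by omega⟩ : Fin (D - d_e)) : ℕ), by simp only; omega⟩ : Fin D)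
          = i := Fin.ext (by simp only; omega)
      rw [hwi, hi'] at h
      rw [Pi.add_apply]
      constructor <;> linarith [h.1, h.2]
  rw [hX]
  exact ⟨fun i => (hcoord i).1, fun i => (hcoord i).2⟩
end

section
/- Let D, d, d_e be natural numbers with 1 ≤ d_e, d_e ≤ d and d_e < D, let U be a D×d_e real matrix and V a D×(D−d_e) real matrix with UᵀU = I, VᵀV = I, UᵀV = 0 and U Uᵀ + V Vᵀ = I. Suppose f : ℝ^D → ℝ is Lipschitz continuous with constant L and satisfies f(x) = f(U Uᵀ x) for all x, let X = [−1,1]^D, and let x* ∈ X satisfy f(x*) ≤ f(x) for all x ∈ X. Assume non-degeneracy: the Lebesgue measure of Ḡ* = { g ∈ ℝ^{D−d_e} : U Uᵀ x* + V g ∈ X } is positive. Let μ be the Gaussian matrix measure on D×d real matrices and let ε > 0. Then there exists τ_ε > 0 such that for every p ∈ X, μ{ A : ∃ y ∈ ℝ^d, A y + p ∈ X and f(A y + p) ≤ f(x*) + ε } ≥ τ_ε. -/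
/-!
Contracting `x*` slightly towards the origin gives `q = (1 - δ) x*`, and, by the Lipschitz bound,
for small `δ` the cube of sup-norm radius `δ` around `q` lies in
`X = [-1, 1]^D` and consists of points where `f ≤ f(x*) + ε`. With `y` the first basis vector,
`A y + p` lies in this cube as soon as the first column of `A` lies in the cube of radius `δ` around
`q - p`. The coordinates of that column are independent standard normal variables, and `q - p` is
bounded by `2` coordinatewise, so bounding the Gaussian density from below on `[-3, 3]` bounds the
probability of this event from below by a positive constant independent of `p`
(`gaussian_interval_lower`, `gaussMatrix_column_box`).
-/

open Matrix MeasureTheory ProbabilityTheory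
open scoped ENNReal

/-- The standard Gaussian gives intervals of radius `δ` centred in `[-2, 2]` a mass bounded below,
uniformly in the centre. -/
lemma gaussian_interval_lower (δ : ℝ) (hδ : 0 < δ) (hδ1 : δ ≤ 1) :
    ∃ c : ℝ≥0∞, 0 < c ∧ ∀ t : ℝ, |t| ≤ 2 → c ≤ gaussianReal 0 1 (Set.Icc (t - δ) (t + δ)) := by
  refine ⟨gaussianPDF 0 1 3 * ENNReal.ofReal (2 * δ), ?_, fun t ht => ?_⟩
  · exact ENNReal.mul_pos (gaussianPDF_pos 0 one_ne_zero 3).ne'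
      (ENNReal.ofReal_pos.2 (by linarith)).ne'
  · have hvol : volume (Set.Icc (t - δ) (t + δ)) = ENNReal.ofReal (2 * δ) := by
      rw [Real.volume_Icc]; congr 1; ring
    rw [gaussianReal_apply 0 one_ne_zero, ← hvol, ← setLIntegral_const]
    refine setLIntegral_mono (measurable_gaussianPDF 0 1) fun x hx => ?_
    rw [gaussianPDF, gaussianPDF]
    refine ENNReal.ofReal_le_ofReal ?_
    simp only [gaussianPDFReal]
    obtain ⟨hx1, hx2⟩ := hx
    obtain ⟨ht1, ht2⟩ := abs_le.1 ht
    have hsq : (x - 0) ^ 2 ≤ (3 - 0) ^ 2 := by nlinarith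
    gcongr

/-- The entries of one column of a Gaussian matrix are independent standard normal variables. -/
lemma gaussMatrix_column_box {D d : ℕ} (j : Fin d) (I : Fin D → Set ℝ)
    (hI : ∀ i, MeasurableSet (I i)) :
    gaussMatrix D d {A | ∀ i, A i j ∈ I i} = ∏ i, gaussianReal 0 1 (I i) := by
  have hset : {A : Fin D → Fin d → ℝ | ∀ i, A i j ∈ I i} =
      Set.univ.pi fun i => Function.eval j ⁻¹' I i := by
    ext A; simp
  rw [hset, gaussMatrix, Measure.pi_pi]
  refine Finset.prod_congr rfl fun i _ => ?_
  exact (measurePreserving_eval (fun _ : Fin d => gaussianReal 0 1) j).measure_preimage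
    (hI i).nullMeasurableSet

lemma euclNorm_le {k : ℕ} (w : Fin k → ℝ) (r : ℝ) (hr : 0 ≤ r) (hw : ∀ i, |w i| ≤ r) :
    euclNorm w ≤ k * r := by
  refine Real.sqrt_le_iff.2 ⟨by positivity, ?_⟩
  calc ∑ i, w i ^ 2 ≤ ∑ _i : Fin k, r ^ 2 :=
        Finset.sum_le_sum fun i _ => sq_le_sq.2 (by rw [abs_of_nonneg hr]; exact hw i)
    _ = k * r ^ 2 := by simp
    _ ≤ (k * r) ^ 2 := by
        have hk : (k : ℝ) ≤ (k : ℝ) ^ 2 := by exact_mod_cast Nat.le_self_pow two_ne_zero k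
        rw [mul_pow]
        exact mul_le_mul_of_nonneg_right hk (sq_nonneg r)

/-- For Lipschitz `f` with a non-degenerate component of global minimizers,
the probability that the reduced problem is `ε`-successful is bounded away from zero,
uniformly in `p ∈ X`. -/
theorem stmt7 (D d d_e : ℕ) (h1 : 1 ≤ d_e) (h2 : d_e ≤ d) (h3 : d_e < D)
    (U : Matrix (Fin D) (Fin d_e) ℝ) (V : Matrix (Fin D) (Fin (D - d_e)) ℝ)
    (hU : Uᵀ * U = 1) (hV : Vᵀ * V = 1) (hUV : Uᵀ * V = 0)
    (hUV1 : U * Uᵀ + V * Vᵀ = 1)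
    (f : (Fin D → ℝ) → ℝ) (L : ℝ)
    (hLip : ∀ x y : Fin D → ℝ, |f x - f y| ≤ L * euclNorm (x - y))
    (hf : ∀ x : Fin D → ℝ, f x = f (U.mulVec (Uᵀ.mulVec x)))
    (X : Set (Fin D → ℝ)) (hX : X = Set.Icc (-1 : Fin D → ℝ) 1)
    (xstar : Fin D → ℝ) (hxX : xstar ∈ X) (hmin : ∀ x ∈ X, f xstar ≤ f x)
    (hnondeg :
      0 < volume {g : Fin (D - d_e) → ℝ | U.mulVec (Uᵀ.mulVec xstar) + V.mulVec g ∈ X})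
    (ε : ℝ) (hε : 0 < ε) :
    ∃ τ : ℝ≥0∞, 0 < τ ∧ ∀ p ∈ X,
      τ ≤ gaussMatrix D d {A : Fin D → Fin d → ℝ |
        ∃ y : Fin d → ℝ, (Matrix.of A).mulVec y + p ∈ X ∧
          f ((Matrix.of A).mulVec y + p) ≤ f xstar + ε} := by
  -- The cube of radius `δ` around `(1 - δ) x*` lies within sup-norm distance `2 δ` of `x*`,
  -- hence within Euclidean distance `2 δ D`.
  set δ : ℝ := min 1 (ε / (2 * (|L| + 1) * (D + 1))) with hδdef
  have hδ : 0 < δ := lt_min one_pos (by positivity)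
  have hδ1 : δ ≤ 1 := min_le_left _ _
  have hδε : |L| * (D * (2 * δ)) ≤ ε := by
    have h : δ * (2 * (|L| + 1) * (D + 1)) ≤ ε :=
      (le_div_iff₀ (by positivity)).1 (min_le_right _ _)
    have : 0 ≤ δ * (2 * (|L| + D + 1)) := by positivity
    linarith
  obtain ⟨c, hc, hcI⟩ := gaussian_interval_lower δ hδ hδ1
  subst hX
  refine ⟨c ^ D, pos_iff_ne_zero.2 (pow_ne_zero D hc.ne'), fun p hp => ?_⟩
  have hx : ∀ i, -1 ≤ xstar i ∧ xstar i ≤ 1 := fun i => ⟨hxX.1 i, hxX.2 i⟩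
  have hp' : ∀ i, -1 ≤ p i ∧ p i ≤ 1 := fun i => ⟨hp.1 i, hp.2 i⟩
  let j : Fin d := ⟨0, by omega⟩
  let z : Fin D → ℝ := fun i => (1 - δ) * xstar i - p i
  let I : Fin D → Set ℝ := fun i => Set.Icc (z i - δ) (z i + δ)
  have hz : ∀ i, |z i| ≤ 2 := fun i => by
    obtain ⟨a, b⟩ := hx i
    obtain ⟨a', b'⟩ := hp' i
    exact abs_le.2 ⟨by simp only [z]; nlinarith, by simp only [z]; nlinarith⟩
  calc c ^ D = ∏ _i : Fin D, c := by simp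
    _ ≤ ∏ i, gaussianReal 0 1 (I i) := Finset.prod_le_prod' fun i _ => hcI (z i) (hz i)
    _ = gaussMatrix D d {A | ∀ i, A i j ∈ I i} :=
        (gaussMatrix_column_box j I fun _ => measurableSet_Icc).symm
    _ ≤ _ := measure_mono fun A hA => ?_
  -- With `y` the `j`-th basis vector, `A y` is the `j`-th column of `A`.
  refine ⟨Pi.single j 1, ?_⟩
  have hAy : ∀ i, ((Matrix.of A).mulVec (Pi.single j 1) + p) i = A i j + p i := fun i => by
    simp
  generalize (Matrix.of A).mulVec (Pi.single j 1) + p = x at hAy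
  have hbd : ∀ i, (1 - δ) * xstar i - δ ≤ x i ∧ x i ≤ (1 - δ) * xstar i + δ := fun i => by
    obtain ⟨a, b⟩ := hA i
    simp only [z] at a b
    rw [hAy i]
    constructor <;> linarith
  refine ⟨⟨fun i => ?_, fun i => ?_⟩, ?_⟩
  · have := hbd i
    have := hx i
    simp only [Pi.neg_apply, Pi.one_apply]
    nlinarith
  · have := hbd i
    have := hx i
    simp only [Pi.one_apply]
    nlinarith
  · have hn : euclNorm (x - xstar) ≤ D * (2 * δ) := by
      refine euclNorm_le _ _ (by positivity) fun i => ?_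
      obtain ⟨a, b⟩ := hbd i
      obtain ⟨a', b'⟩ := hx i
      rw [Pi.sub_apply]
      exact abs_le.2 ⟨by nlinarith, by nlinarith⟩
    have h0 : 0 ≤ euclNorm (x - xstar) := Real.sqrt_nonneg _
    have hL1 := mul_le_mul_of_nonneg_right (le_abs_self L) h0
    have hL2 := mul_le_mul_of_nonneg_left hn (abs_nonneg L)
    have := (le_abs_self _).trans (hLip x xstar)
    linarith
end

section
/- Let (Ω, 𝓕, P) be a probability space, let K ≥ 1 be a natural number, and let F^0 ⊆ F^{1/2} ⊆ F^1 ⊆ F^{3/2} ⊆ ⋯ ⊆ F^{K−1/2} ⊆ F^K ⊆ 𝓕 be a chain of sub-σ-algebras (i.e., for each k = 1,…,K, F^{k−1} ⊆ F^{k−1/2} ⊆ F^k). For k = 1,…,K let R_k, S_k : Ω → ℝ be random variables taking only the values 0 and 1, with R_k measurable with respect to F^{k−1/2} and S_k measurable with respect to F^k. Let τ, ρ ∈ (0,1] be such that for every k, the conditional expectations satisfy E[R_k | F^{k−1}] ≥ τ almost everywhere and E[S_k | F^{k−1/2}] ≥ ρ almost everywhere. Then P( ⋃_{k=1}^K ({R_k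 = 1} ∩ {S_k = 1}) ) ≥ 1 − (1 − τρ)^K. -/
/-!
Let `B n` be the event that no round `k ≤ n` is jointly successful; it is `F n`-measurable.
The defining property of conditional expectation turns each lower bound on a conditional
probability into `c * P A ≤ P (A ∩ {f = 1})` for `A` in the conditioning σ-algebra
(`mul_measureReal_le_inter`). Applied to `B n ∈ F n` with `R (n + 1)`, and then to
`B n ∩ {R (n + 1) = 1} ∈ G (n + 1)` with `S (n + 1)`, it shows that round `n + 1` succeeds on at
least a fraction `τ * ρ` of `B n`. Hence `P (B (n + 1)) ≤ (1 - τ * ρ) * P (B n)`, so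
`P (B K) ≤ (1 - τ * ρ) ^ K` by induction, and the claim follows by taking complements.
-/

open MeasureTheory

/-- A lower bound `c` on the conditional probability of `{f = 1}` given `m` passes to every
event `A` of `m`: integrate the bound over `A`. -/
theorem mul_measureReal_le_inter {Ω : Type*} {m m0 : MeasurableSpace Ω} {P : Measure Ω}
    [IsProbabilityMeasure P] (hm : m ≤ m0) {f : Ω → ℝ} (hf : Measurable f)
    (hf01 : ∀ ω, f ω = 0 ∨ f ω = 1) {c : ℝ} (hc : ∀ᵐ ω ∂P, c ≤ (P[f | m]) ω)
    {A : Set Ω} (hA : MeasurableSet[m] A) :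
    c * P.real A ≤ P.real (A ∩ {ω | f ω = 1}) := by
  have hs : MeasurableSet {ω | f ω = 1} := hf (measurableSet_singleton 1)
  have hfi : f = {ω | f ω = 1}.indicator 1 := by
    ext ω
    rcases hf01 ω with h | h <;> simp [Set.indicator, h]
  have hint : Integrable f P := by
    rw [hfi]
    exact (integrable_const (1 : ℝ)).indicator hs
  calc c * P.real A = ∫ _ in A, c ∂P := by simp [mul_comm]
    _ ≤ ∫ ω in A, (P[f | m]) ω ∂P :=
        setIntegral_mono_ae (integrable_const c).integrableOn
          integrable_condExp.integrableOn hc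
    _ = ∫ ω in A, f ω ∂P := setIntegral_condExp hm hint hA
    _ = P.real (A ∩ {ω | f ω = 1}) := by
        conv_lhs => rw [hfi]
        rw [setIntegral_indicator hs]
        simp

/-- Lower bound on the probability of at least one jointly successful round,
for indicator-valued random variables adapted to a chain of sub-σ-algebras
`F⁰ ⊆ F^{1/2} ⊆ F¹ ⊆ ⋯ ⊆ F^{K−1/2} ⊆ F^K` (here `G k` plays the role of `F^{k−1/2}`),
whose conditional expectations are bounded below by `τ` and `ρ` respectively. -/
theorem stmt8 {Ω : Type*} [m0 : MeasurableSpace Ω] (P : Measure Ω) [IsProbabilityMeasure P]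
    (K : ℕ) (hK : 1 ≤ K)
    (F : ℕ → MeasurableSpace Ω) (G : ℕ → MeasurableSpace Ω)
    (hFG : ∀ k, 1 ≤ k → k ≤ K → F (k - 1) ≤ G k)
    (hGF : ∀ k, 1 ≤ k → k ≤ K → G k ≤ F k)
    (hFm : ∀ k, k ≤ K → F k ≤ m0)
    (R S : ℕ → Ω → ℝ)
    (hR01 : ∀ k, 1 ≤ k → k ≤ K → ∀ ω, R k ω = 0 ∨ R k ω = 1)
    (hS01 : ∀ k, 1 ≤ k → k ≤ K → ∀ ω, S k ω = 0 ∨ S k ω = 1)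
    (hRmeas : ∀ k, 1 ≤ k → k ≤ K → Measurable[G k] (R k))
    (hSmeas : ∀ k, 1 ≤ k → k ≤ K → Measurable[F k] (S k))
    (τ ρ : ℝ) (hτ : 0 < τ) (hτ1 : τ ≤ 1) (hρ : 0 < ρ) (hρ1 : ρ ≤ 1)
    (hcondR : ∀ k, 1 ≤ k → k ≤ K → ∀ᵐ ω ∂P, τ ≤ (P[R k | F (k - 1)]) ω)
    (hcondS : ∀ k, 1 ≤ k → k ≤ K → ∀ᵐ ω ∂P, ρ ≤ (P[S k | G k]) ω) :
    ENNReal.ofReal (1 - (1 - τ * ρ) ^ K) ≤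
      P (⋃ k ∈ Finset.Icc 1 K, ({ω | R k ω = 1} ∩ {ω | S k ω = 1})) := by
  set B : ℕ → Set Ω :=
    fun n => (⋃ k ∈ Finset.Icc 1 n, ({ω | R k ω = 1} ∩ {ω | S k ω = 1}))ᶜ with hB
  have hBsucc : ∀ n, B (n + 1) = B n \ (B n ∩ {ω | R (n + 1) ω = 1} ∩ {ω | S (n + 1) ω = 1}) := by
    intro n
    have hI : Finset.Icc 1 (n + 1) = insert (n + 1) (Finset.Icc 1 n) := by
      ext k
      simp only [Finset.mem_Icc, Finset.mem_insert]
      omega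
    simp only [hB, hI, Finset.set_biUnion_insert]
    ext ω
    simp only [Set.mem_compl_iff, Set.mem_union, Set.mem_sdiff, Set.mem_inter_iff]
    tauto
  have key : ∀ n, n ≤ K → MeasurableSet[F n] (B n) ∧ P.real (B n) ≤ (1 - τ * ρ) ^ n := by
    intro n
    induction n with
    | zero =>
      intro _
      have h0 : B 0 = Set.univ := by simp only [hB]; simp
      rw [h0]
      exact ⟨MeasurableSet.univ, by simp⟩
    | succ n ih =>
      intro hn
      obtain ⟨hmeas, hle⟩ := ih (by omega)
      have h1 : 1 ≤ n + 1 := by omega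
      have hFG' : F n ≤ G (n + 1) := hFG (n + 1) h1 hn
      have hGF' := hGF (n + 1) h1 hn
      have hF0 := hFm (n + 1) hn
      have hR : MeasurableSet[G (n + 1)] {ω | R (n + 1) ω = 1} :=
        hRmeas (n + 1) h1 hn (measurableSet_singleton 1)
      have hS : MeasurableSet[F (n + 1)] {ω | S (n + 1) ω = 1} :=
        hSmeas (n + 1) h1 hn (measurableSet_singleton 1)
      have hBR : MeasurableSet[G (n + 1)] (B n ∩ {ω | R (n + 1) ω = 1}) :=
        (hFG' _ hmeas).inter hR
      have hBRS : MeasurableSet[F (n + 1)]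
          (B n ∩ {ω | R (n + 1) ω = 1} ∩ {ω | S (n + 1) ω = 1}) :=
        (hGF' _ hBR).inter hS
      have e1 : τ * P.real (B n) ≤ P.real (B n ∩ {ω | R (n + 1) ω = 1}) :=
        mul_measureReal_le_inter (hFm n (by omega))
          ((hRmeas (n + 1) h1 hn).mono (hGF'.trans hF0) le_rfl) (hR01 (n + 1) h1 hn)
          (hcondR (n + 1) h1 hn) hmeas
      have e2 := mul_measureReal_le_inter (hGF'.trans hF0)
          ((hSmeas (n + 1) h1 hn).mono hF0 le_rfl) (hS01 (n + 1) h1 hn)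
          (hcondS (n + 1) h1 hn) hBR
      rw [hBsucc]
      refine ⟨(hGF' _ (hFG' _ hmeas)).diff hBRS, ?_⟩
      rw [measureReal_sdiff (Set.inter_subset_left.trans Set.inter_subset_left) (hF0 _ hBRS)]
      have e3 := mul_le_mul_of_nonneg_left e1 hρ.le
      have e4 : 0 ≤ 1 - τ * ρ := by nlinarith
      have e5 := mul_le_mul_of_nonneg_left hle e4
      rw [pow_succ']
      linarith
  obtain ⟨hmeas, hle⟩ := key K le_rfl
  have hcompl := probReal_compl_eq_one_sub (μ := P) (hFm K le_rfl _ hmeas)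
  simp only [hB, compl_compl] at hcompl hle
  apply ENNReal.ofReal_le_of_le_toReal
  change _ ≤ P.real _
  linarith
end
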